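/- arXiv:math/0101251 — 9 statements merged into one kernel-verified Lean document; each statement's English description precedes it below -/
import Mathlib

section
/- Let k ≥ 2 and let e₁,…,e_k be integers with e_i ≥ 2 for all i and e_j ≥ 3 for at least one j. Then all four entries of the integer matrix B(e₁−1, e₂, …, e_{k−1}, e_k−1) are positive. -/
/-- The matrix `[[0,-1],[1,x]]`. -/
def Mb (x : ℤ) : Matrix (Fin 2) (Fin 2) ℤ := !![0, -1; 1, x]

/-- The product `[[0,-1],[1,b_k]] ⋯ [[0,-1],[1,b₁]]` for a list `[b₁,…,b_k]`. -/
def prodB (L : List ℤ) : Matrix (Fin 2) (Fin 2) ℤ := ((L.map Mb).reverse).prod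

/-- `B(b₁,…,b_k) = [[0,1],[-1,0]] · [[0,-1],[1,b_k]] ⋯ [[0,-1],[1,b₁]]`. -/
def Bmat (L : List ℤ) : Matrix (Fin 2) (Fin 2) ℤ := !![0, 1; -1, 0] * prodB L

/-- The list `e₁-1, e₂, …, e_{k-1}, e_k-1`. -/
def cuspList (k : ℕ) (e : Fin k → ℤ) : List ℤ :=
  List.ofFn fun i => e i - (if i.val = 0 ∨ i.val = k - 1 then 1 else 0)

/-!
With `P = [[1,1],[-1,0]]`, the conjugate `P · [[0,-1],[1,x]] · P⁻¹ = [[x-1,x-2],[1,1]]` dominates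
the identity matrix entrywise as soon as `x ≥ 2`. The two decrements `e₁ - 1` and `e_k - 1` are
exactly what makes the conjugating matrices disappear at the two ends:
`P · [[0,-1],[1,e₁-1]] = [[1,e₁-2],[0,1]]` and
`[[0,1],[-1,0]] · [[0,-1],[1,e_k-1]] = P · [[0,-1],[1,e_k]]`. Hence
`B(e₁-1, e₂, …, e_k-1) = [[e_k-1,e_k-2],[1,1]] ⋯ [[e₂-1,e₂-2],[1,1]] · [[1,e₁-2],[0,1]]`.
A product of matrices dominating the identity dominates each of its factors, so the lower left
entry is positive because `k ≥ 2`, and the upper right one because some `e_j ≥ 3`.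
-/

section EntrywiseLE

variable {l m n R : Type*}

/-- The entrywise order on matrices, as opposed to the Loewner order that Mathlib provides. -/
def EntrywiseLE [LE R] (A B : Matrix m n R) : Prop :=
  ∀ i j, A i j ≤ B i j

theorem EntrywiseLE.refl [Preorder R] (A : Matrix m n R) : EntrywiseLE A A :=
  fun _ _ => le_rfl

theorem EntrywiseLE.trans [Preorder R] {A B C : Matrix m n R} (hAB : EntrywiseLE A B)
    (hBC : EntrywiseLE B C) : EntrywiseLE A C :=
  fun i j => (hAB i j).trans (hBC i j)

variable [Semiring R] [PartialOrder R]

theorem entrywiseLE_one_upperUnitriangular {t : R} (ht : 0 ≤ t) :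
    EntrywiseLE 1 !![1, t; 0, 1] := by
  intro i j
  fin_cases i <;> fin_cases j <;> simp [ht]

variable [IsOrderedRing R]

theorem entrywiseLE_zero_one [DecidableEq n] : EntrywiseLE (0 : Matrix n n R) 1 := by
  intro i j
  rw [Matrix.zero_apply, Matrix.one_apply]
  split_ifs
  exacts [zero_le_one, le_rfl]

protected theorem EntrywiseLE.mul [Fintype m] {A A' : Matrix l m R} {B B' : Matrix m n R}
    (hA : EntrywiseLE A A') (hB : EntrywiseLE B B') (hA' : EntrywiseLE 0 A')
    (hB₀ : EntrywiseLE 0 B) : EntrywiseLE (A * B) (A' * B') := fun i j => by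
  simp only [Matrix.mul_apply]
  exact Finset.sum_le_sum fun k _ => mul_le_mul (hA i k) (hB k j) (hB₀ k j) (hA' i k)

variable [Fintype n] [DecidableEq n]

theorem EntrywiseLE.le_mul_of_one_le_right {A : Matrix m n R} {B : Matrix n n R}
    (hA : EntrywiseLE 0 A) (hB : EntrywiseLE 1 B) : EntrywiseLE A (A * B) := by
  simpa only [Matrix.mul_one] using EntrywiseLE.mul (EntrywiseLE.refl _) hB hA entrywiseLE_zero_one

theorem EntrywiseLE.le_mul_of_one_le_left {A : Matrix n n R} {B : Matrix n m R}
    (hA : EntrywiseLE 1 A) (hB : EntrywiseLE 0 B) : EntrywiseLE B (A * B) := by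
  simpa only [Matrix.one_mul] using
    EntrywiseLE.mul hA (EntrywiseLE.refl _) (entrywiseLE_zero_one.trans hA) hB

theorem EntrywiseLE.one_le_list_prod {L : List (Matrix n n R)}
    (hL : ∀ A ∈ L, EntrywiseLE 1 A) : EntrywiseLE 1 L.prod :=
  List.prod_induction (EntrywiseLE 1)
    (fun _ _ hA hB => hA.trans (le_mul_of_one_le_right (entrywiseLE_zero_one.trans hA) hB))
    (EntrywiseLE.refl 1) hL

theorem EntrywiseLE.le_list_prod {L : List (Matrix n n R)} (hL : ∀ A ∈ L, EntrywiseLE 1 A)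
    {A : Matrix n n R} (hA : A ∈ L) : EntrywiseLE A L.prod := by
  induction L with
  | nil => simp at hA
  | cons B L ih =>
    obtain ⟨hB, hL⟩ := List.forall_mem_cons.mp hL
    have hprod := one_le_list_prod hL
    rw [List.prod_cons]
    obtain rfl | hA := List.mem_cons.mp hA
    · exact le_mul_of_one_le_right (entrywiseLE_zero_one.trans hB) hprod
    · exact (ih hL hA).trans (le_mul_of_one_le_left hB (entrywiseLE_zero_one.trans hprod))

end EntrywiseLE

theorem semiconjBy_list_prod_map {ι M : Type*} [Monoid M] {a : M} {f g : ι → M}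
    {L : List ι} (h : ∀ i ∈ L, SemiconjBy a (f i) (g i)) :
    SemiconjBy a (L.map f).prod (L.map g).prod := by
  induction L with
  | nil => exact SemiconjBy.one_right a
  | cons i L ih =>
    obtain ⟨hi, hL⟩ := List.forall_mem_cons.mp h
    simpa only [List.map_cons, List.prod_cons] using hi.mul_right (ih hL)

/-- The change of basis `P` that makes the matrices `Mb x` with `2 ≤ x` nonnegative. -/
def nonnegBasis : Matrix (Fin 2) (Fin 2) ℤ := !![1, 1; -1, 0]

/-- The conjugate `P * Mb x * P⁻¹` of `Mb x` by `P = nonnegBasis`, a nonnegative matrix when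
`2 ≤ x`. -/
def conjMb (x : ℤ) : Matrix (Fin 2) (Fin 2) ℤ := !![x - 1, x - 2; 1, 1]

theorem semiconjBy_nonnegBasis_Mb (x : ℤ) : SemiconjBy nonnegBasis (Mb x) (conjMb x) := by
  simp only [SemiconjBy, nonnegBasis, Mb, conjMb, Matrix.mul_fin_two]
  ring_nf

theorem nonnegBasis_mul_Mb_sub_one (x : ℤ) : nonnegBasis * Mb (x - 1) = !![1, x - 2; 0, 1] := by
  simp only [nonnegBasis, Mb, Matrix.mul_fin_two]
  ring_nf

theorem rotation_mul_Mb_sub_one (x : ℤ) :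
    !![0, 1; -1, 0] * Mb (x - 1) = nonnegBasis * Mb x := by
  simp only [nonnegBasis, Mb, Matrix.mul_fin_two]
  ring_nf

theorem entrywiseLE_one_conjMb {x : ℤ} (hx : 2 ≤ x) : EntrywiseLE 1 (conjMb x) := by
  intro i j
  fin_cases i <;> fin_cases j <;> simp [conjMb] <;> omega

theorem prodB_cons (x : ℤ) (L : List ℤ) : prodB (x :: L) = prodB L * Mb x := by
  simp [prodB]

theorem prodB_append_singleton (L : List ℤ) (x : ℤ) : prodB (L ++ [x]) = Mb x * prodB L := by
  simp [prodB]

theorem nonnegBasis_mul_prodB (L : List ℤ) :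
    nonnegBasis * prodB L = (L.map conjMb).reverse.prod * nonnegBasis := by
  simpa only [prodB, List.map_reverse] using
    (semiconjBy_list_prod_map (L := L.reverse) fun x _ => semiconjBy_nonnegBasis_Mb x).eq

theorem Bmat_append_sub_one (L : List ℤ) (b : ℤ) :
    Bmat (L ++ [b - 1]) = nonnegBasis * prodB (L ++ [b]) := by
  simp only [Bmat, prodB_append_singleton, ← mul_assoc, rotation_mul_Mb_sub_one]

theorem Bmat_sub_one_cons_append_sub_one (a b : ℤ) (L : List ℤ) :
    Bmat ((a - 1) :: L ++ [b - 1]) =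
      (!![1, a - 2; 0, 1] :: (L ++ [b]).map conjMb).reverse.prod := by
  rw [Bmat_append_sub_one, List.cons_append, prodB_cons, ← mul_assoc, nonnegBasis_mul_prodB,
    mul_assoc, nonnegBasis_mul_Mb_sub_one, List.reverse_cons, List.prod_append,
    List.prod_singleton]

theorem cuspList_add_two (n : ℕ) (e : Fin (n + 2) → ℤ) :
    cuspList (n + 2) e = (e 0 - 1) :: List.ofFn (fun i : Fin n => e i.castSucc.succ) ++
      [e (Fin.last (n + 1)) - 1] := by
  have hne (i : Fin n) : (i : ℕ) ≠ n := i.isLt.ne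
  rw [cuspList, List.ofFn_succ, List.ofFn_succ']
  simp [hne]

/-- The factors of `Bmat (cuspList k e)` after conjugation, one for each index and listed from `e₁`
to `e_k`, so that the matrix is the product of the reversed list (for `2 ≤ k = n + 1`). -/
def conjFactors {n : ℕ} (e : Fin (n + 1) → ℤ) : List (Matrix (Fin 2) (Fin 2) ℤ) :=
  !![1, e 0 - 2; 0, 1] :: List.ofFn fun i : Fin n => conjMb (e i.succ)

theorem conjMb_mem_conjFactors {n : ℕ} (e : Fin (n + 1) → ℤ) (i : Fin n) :
    conjMb (e i.succ) ∈ conjFactors e :=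
  List.mem_cons_of_mem _ (List.mem_ofFn.mpr ⟨i, rfl⟩)

theorem entrywiseLE_one_of_mem_conjFactors {n : ℕ} {e : Fin (n + 1) → ℤ} (he : ∀ i, 2 ≤ e i) :
    ∀ A ∈ conjFactors e, EntrywiseLE 1 A := by
  simp only [conjFactors, List.forall_mem_cons, List.forall_mem_ofFn_iff]
  exact ⟨entrywiseLE_one_upperUnitriangular (sub_nonneg.mpr (he 0)),
    fun i => entrywiseLE_one_conjMb (he i.succ)⟩

theorem exists_mem_conjFactors_apply_zero_one {n : ℕ} (e : Fin (n + 1) → ℤ) (j : Fin (n + 1)) :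
    ∃ A ∈ conjFactors e, A 0 1 = e j - 2 := by
  cases j using Fin.cases with
  | zero => exact ⟨_, List.mem_cons_self, rfl⟩
  | succ i => exact ⟨_, conjMb_mem_conjFactors e i, rfl⟩

theorem Bmat_cuspList (n : ℕ) (e : Fin (n + 2) → ℤ) :
    Bmat (cuspList (n + 2) e) = (conjFactors e).reverse.prod := by
  rw [cuspList_add_two, Bmat_sub_one_cons_append_sub_one, conjFactors, List.ofFn_succ']
  simp [List.map_ofFn, Function.comp_def]

theorem stmt_0 (k : ℕ) (hk : 2 ≤ k) (e : Fin k → ℤ)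
    (he : ∀ i, 2 ≤ e i) (he3 : ∃ j, 3 ≤ e j) :
    ∀ i j : Fin 2, 0 < Bmat (cuspList k e) i j := by
  obtain ⟨n, rfl⟩ := Nat.exists_eq_add_of_le' hk
  rw [Bmat_cuspList]
  have one_le : ∀ A ∈ (conjFactors e).reverse, EntrywiseLE 1 A := fun A hA =>
    entrywiseLE_one_of_mem_conjFactors he A (List.mem_reverse.mp hA)
  have factor_le {A} (hA : A ∈ conjFactors e) : EntrywiseLE A (conjFactors e).reverse.prod :=
    EntrywiseLE.le_list_prod one_le (List.mem_reverse.mpr hA)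
  have diag (i : Fin 2) : 0 < (conjFactors e).reverse.prod i i := calc
    (0 : ℤ) < (1 : Matrix (Fin 2) (Fin 2) ℤ) i i := by simp
    _ ≤ (conjFactors e).reverse.prod i i := EntrywiseLE.one_le_list_prod one_le i i
  have lower : 0 < (conjFactors e).reverse.prod 1 0 :=
    one_pos.trans_le (factor_le (conjMb_mem_conjFactors e 0) 1 0)
  have upper : 0 < (conjFactors e).reverse.prod 0 1 := by
    obtain ⟨j, hj⟩ := he3
    obtain ⟨A, hA, hAj⟩ := exists_mem_conjFactors_apply_zero_one e j
    linarith [factor_le hA 0 1]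
  intro i j
  fin_cases i <;> fin_cases j
  exacts [diag 0, upper, lower, diag 1]
end

section
/- Let k ≥ 2 and let b₁,…,b_k be integers with b_i ≥ 2 for all i. Write the matrix product [[0,-1],[1,b_k]] ⋯ [[0,-1],[1,b₁]] as [[-γ,-δ],[α,β]]. Then 0 < γ, γ < α < β, and γ < δ < β. Moreover β + γ − α − δ ≥ 0, with equality if and only if b₁ = b₂ = ⋯ = b_k = 2. -/
/-!
Multiplying a row `(x, y)` by `Mb a` on the right gives `(y, a * y - x)`: its gap `y - x` grows by
`(a - 2) * y`, and its second entry grows by the new gap. Hence, when every `a` is at least `2`,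
nonnegativity of the gap and of the second entry persists and both can only increase; if the second
entry starts out positive, the gap stays constant exactly when every `a` equals `2`. The assertions
are read off from the images of three rows: `(-1, 0)` goes to `(γ, δ)`, `(0, 1)` to `(α, β)`, and
their difference `(1, 1)` to `(α - γ, β - δ)`, whose gap is `β + γ - α - δ`.
-/

section RowGap

open scoped Matrix

/-- The gap `y - x` of a row `(x, y)`, the quantity that right multiplication by `Mb a` changes by
`(a - 2) * y`. -/
def rowGap (v : Fin 2 → ℤ) : ℤ := v 1 - v 0

theorem vecMul_fin_two {R : Type*} [NonUnitalNonAssocSemiring R] (v : Fin 2 → R)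
    (M : Matrix (Fin 2) (Fin 2) R) :
    v ᵥ* M = ![v 0 * M 0 0 + v 1 * M 1 0, v 0 * M 0 1 + v 1 * M 1 1] := by
  ext j
  fin_cases j <;> simp [Matrix.vecMul, dotProduct, Fin.sum_univ_two]

theorem vecMul_Mb (v : Fin 2 → ℤ) (a : ℤ) : v ᵥ* Mb a = ![v 1, v 1 * a - v 0] := by
  rw [vecMul_fin_two]
  simp [Mb, neg_add_eq_sub]

theorem vecMul_Mb_one (v : Fin 2 → ℤ) (a : ℤ) : (v ᵥ* Mb a) 1 = v 1 + rowGap (v ᵥ* Mb a) := by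
  simp [vecMul_Mb, rowGap]

theorem rowGap_vecMul_Mb (v : Fin 2 → ℤ) (a : ℤ) :
    rowGap (v ᵥ* Mb a) = rowGap v + (a - 2) * v 1 := by
  simp only [vecMul_Mb, rowGap, Matrix.cons_val_zero, Matrix.cons_val_one]
  ring

theorem vecMul_prodB_nil (v : Fin 2 → ℤ) : v ᵥ* prodB [] = v := by
  simp [prodB]

theorem vecMul_prodB_cons (v : Fin 2 → ℤ) (a : ℤ) (L : List ℤ) :
    v ᵥ* prodB (a :: L) = (v ᵥ* prodB L) ᵥ* Mb a := by
  simp [prodB]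

theorem vecMul_prodB_cons_zero (v : Fin 2 → ℤ) (a : ℤ) (L : List ℤ) :
    (v ᵥ* prodB (a :: L)) 0 = (v ᵥ* prodB L) 1 := by
  rw [vecMul_prodB_cons, vecMul_Mb, Matrix.cons_val_zero]

variable {L : List ℤ} {v : Fin 2 → ℤ}

theorem le_vecMul_prodB_one_and_rowGap_le (hL : ∀ a ∈ L, 2 ≤ a) (hv : 0 ≤ v 1)
    (hgap : 0 ≤ rowGap v) :
    v 1 ≤ (v ᵥ* prodB L) 1 ∧ rowGap v ≤ rowGap (v ᵥ* prodB L) := by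
  induction L with
  | nil => simp [vecMul_prodB_nil]
  | cons a L ih =>
    obtain ⟨ha, hL⟩ := List.forall_mem_cons.mp hL
    obtain ⟨hone, hmono⟩ := ih hL
    have hincr : 0 ≤ (a - 2) * (v ᵥ* prodB L) 1 :=
      mul_nonneg (sub_nonneg.mpr ha) (hv.trans hone)
    rw [vecMul_prodB_cons, vecMul_Mb_one, rowGap_vecMul_Mb]
    constructor <;> linarith

theorem le_vecMul_prodB_one (hL : ∀ a ∈ L, 2 ≤ a) (hv : 0 ≤ v 1) (hgap : 0 ≤ rowGap v) :
    v 1 ≤ (v ᵥ* prodB L) 1 :=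
  (le_vecMul_prodB_one_and_rowGap_le hL hv hgap).1

theorem rowGap_le_rowGap_vecMul_prodB (hL : ∀ a ∈ L, 2 ≤ a) (hv : 0 ≤ v 1) (hgap : 0 ≤ rowGap v) :
    rowGap v ≤ rowGap (v ᵥ* prodB L) :=
  (le_vecMul_prodB_one_and_rowGap_le hL hv hgap).2

theorem le_vecMul_prodB_zero (hL : ∀ a ∈ L, 2 ≤ a) (hv : 0 ≤ v 1) (hgap : 0 ≤ rowGap v) :
    v 0 ≤ (v ᵥ* prodB L) 0 := by
  cases L with
  | nil => rw [vecMul_prodB_nil]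
  | cons a L =>
    calc v 0 ≤ v 1 := sub_nonneg.mp hgap
      _ ≤ (v ᵥ* prodB L) 1 := le_vecMul_prodB_one (List.forall_mem_cons.mp hL).2 hv hgap
      _ = (v ᵥ* prodB (a :: L)) 0 := (vecMul_prodB_cons_zero v a L).symm

theorem lt_vecMul_prodB_one (hL : ∀ a ∈ L, 2 ≤ a) (hne : L ≠ []) (hv : 0 ≤ v 1)
    (hgap : 0 < rowGap v) : v 1 < (v ᵥ* prodB L) 1 := by
  obtain ⟨a, L, rfl⟩ := List.exists_cons_of_ne_nil hne
  have hone := le_vecMul_prodB_one (List.forall_mem_cons.mp hL).2 hv hgap.le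
  have hmono := rowGap_le_rowGap_vecMul_prodB hL hv hgap.le
  rw [vecMul_prodB_cons] at hmono ⊢
  rw [vecMul_Mb_one]
  linarith

theorem apply_one_lt_vecMul_prodB_zero (hL : ∀ a ∈ L, 2 ≤ a) (hlen : 2 ≤ L.length) (hv : 0 ≤ v 1)
    (hgap : 0 < rowGap v) : v 1 < (v ᵥ* prodB L) 0 := by
  match L, hlen with
  | a :: c :: L, _ =>
    rw [vecMul_prodB_cons_zero]
    exact lt_vecMul_prodB_one (List.forall_mem_cons.mp hL).2 (List.cons_ne_nil c L) hv hgap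

theorem rowGap_vecMul_prodB_eq_iff (hL : ∀ a ∈ L, 2 ≤ a) (hv : 0 < v 1) (hgap : 0 ≤ rowGap v) :
    rowGap (v ᵥ* prodB L) = rowGap v ↔ ∀ a ∈ L, a = 2 := by
  induction L with
  | nil => simp [vecMul_prodB_nil]
  | cons a L ih =>
    obtain ⟨ha, hL⟩ := List.forall_mem_cons.mp hL
    have hone : 0 < (v ᵥ* prodB L) 1 := hv.trans_le (le_vecMul_prodB_one hL hv.le hgap)
    have hmono := rowGap_le_rowGap_vecMul_prodB hL hv.le hgap
    have hincr : 0 ≤ (a - 2) * (v ᵥ* prodB L) 1 := mul_nonneg (sub_nonneg.mpr ha) hone.le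
    have ha_iff : (a - 2) * (v ᵥ* prodB L) 1 = 0 ↔ a = 2 := by
      rw [mul_eq_zero_iff_right hone.ne', sub_eq_zero]
    rw [vecMul_prodB_cons, rowGap_vecMul_Mb, List.forall_mem_cons, ← ih hL, ← ha_iff]
    constructor
    · intro h
      constructor <;> linarith
    · rintro ⟨hzero, hconst⟩
      rw [hconst, hzero, add_zero]

theorem prodB_zero_zero_neg (hL : ∀ a ∈ L, 2 ≤ a) (hlen : 2 ≤ L.length) : prodB L 0 0 < 0 := by
  simpa [vecMul_fin_two] using
    apply_one_lt_vecMul_prodB_zero (v := ![-1, 0]) hL hlen (by decide) (by decide)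

theorem prodB_zero_one_lt_zero_zero (hL : ∀ a ∈ L, 2 ≤ a) : prodB L 0 1 < prodB L 0 0 := by
  have hgap := rowGap_le_rowGap_vecMul_prodB (v := ![-1, 0]) hL (by decide) (by decide)
  simp only [rowGap, vecMul_fin_two, Matrix.cons_val_zero, Matrix.cons_val_one] at hgap
  linarith

theorem prodB_one_zero_lt_one_one (hL : ∀ a ∈ L, 2 ≤ a) : prodB L 1 0 < prodB L 1 1 := by
  have hgap := rowGap_le_rowGap_vecMul_prodB (v := ![0, 1]) hL (by decide) (by decide)
  simp only [rowGap, vecMul_fin_two, Matrix.cons_val_zero, Matrix.cons_val_one] at hgap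
  linarith

theorem neg_prodB_zero_zero_lt_one_zero (hL : ∀ a ∈ L, 2 ≤ a) : -prodB L 0 0 < prodB L 1 0 := by
  have hfst := le_vecMul_prodB_zero (v := ![1, 1]) hL (by decide) (by decide)
  simp only [vecMul_fin_two, Matrix.cons_val_zero, Matrix.cons_val_one] at hfst
  linarith

theorem neg_prodB_zero_one_lt_one_one (hL : ∀ a ∈ L, 2 ≤ a) : -prodB L 0 1 < prodB L 1 1 := by
  have hsnd := le_vecMul_prodB_one (v := ![1, 1]) hL (by decide) (by decide)
  simp only [vecMul_fin_two, Matrix.cons_val_zero, Matrix.cons_val_one] at hsnd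
  linarith

theorem rowGap_one_one_vecMul (M : Matrix (Fin 2) (Fin 2) ℤ) :
    rowGap (![1, 1] ᵥ* M) = M 1 1 + -M 0 0 - M 1 0 - -M 0 1 := by
  simp only [rowGap, vecMul_fin_two, Matrix.cons_val_zero, Matrix.cons_val_one]
  ring

end RowGap

theorem stmt_2 (k : ℕ) (hk : 2 ≤ k) (b : Fin k → ℤ) (hb : ∀ i, 2 ≤ b i) :
    let P := prodB (List.ofFn b)
    let α := P 1 0
    let β := P 1 1
    let γ := -P 0 0
    let δ := -P 0 1
    0 < γ ∧ γ < α ∧ α < β ∧ γ < δ ∧ δ < β ∧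
    0 ≤ β + γ - α - δ ∧ (β + γ - α - δ = 0 ↔ ∀ i, b i = 2) := by
  have hL : ∀ a ∈ List.ofFn b, 2 ≤ a := List.forall_mem_ofFn_iff.mpr hb
  have hlen : 2 ≤ (List.ofFn b).length := by simpa using hk
  intro P α β γ δ
  have hexcess : rowGap (Matrix.vecMul ![1, 1] P) = β + γ - α - δ := rowGap_one_one_vecMul P
  rw [← hexcess]
  exact ⟨neg_pos.mpr (prodB_zero_zero_neg hL hlen),
    neg_prodB_zero_zero_lt_one_zero hL,
    prodB_one_zero_lt_one_one hL,
    neg_lt_neg (prodB_zero_one_lt_zero_zero hL),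
    neg_prodB_zero_one_lt_one_one hL,
    rowGap_le_rowGap_vecMul_prodB hL (by decide) (by decide),
    (rowGap_vecMul_prodB_eq_iff hL (by decide) (by decide)).trans List.forall_mem_ofFn_iff⟩
end

section
/- Let k ≥ 2 and let e₁,…,e_k be integers with e_i ≥ 2 for all i and e_j ≥ 3 for some j. If B(e₁−1, e₂, …, e_{k−1}, e_k−1) = [[a,b],[c,d]], then reversing the order of the e's gives B(e_k−1, e_{k−1}, …, e₂, e₁−1) = [[d,b],[c,a]]; that is, reversing the order exchanges the diagonal entries a and d and leaves b and c unchanged. -/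
/-!
Write `J = [[0,1],[-1,0]]`. Reflection in the anti-diagonal is an anti-automorphism of `2 × 2`
matrices which fixes `J` and takes `Mb x` to `J * Mb x * J⁻¹`. Hence it takes
`J * Mb b_k * ⋯ * Mb b₁` to `(J * Mb b₁ * J⁻¹) * ⋯ * (J * Mb b_k * J⁻¹) * J`, which telescopes to
`J * Mb b₁ * ⋯ * Mb b_k`, the matrix of the reversed list.
-/

section Antitranspose

variable {l m n : ℕ} {R : Type*}

/-- The reflection of a matrix in its anti-diagonal. On `2 × 2` matrices it exchanges the diagonal
entries and fixes the other two. -/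
def antitranspose (A : Matrix (Fin m) (Fin n) R) : Matrix (Fin n) (Fin m) R :=
  A.transpose.submatrix Fin.rev Fin.rev

theorem antitranspose_fin_two (a b c d : R) :
    antitranspose !![a, b; c, d] = !![d, b; c, a] := by
  ext i j
  fin_cases i <;> fin_cases j <;> rfl

theorem antitranspose_one [Zero R] [One R] :
    antitranspose (1 : Matrix (Fin n) (Fin n) R) = 1 := by
  rw [antitranspose, Matrix.transpose_one, Matrix.submatrix_one _ Fin.rev_injective]

theorem antitranspose_mul [AddCommMonoid R] [CommMagma R]
    (A : Matrix (Fin l) (Fin m) R) (B : Matrix (Fin m) (Fin n) R) :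
    antitranspose (A * B) = antitranspose B * antitranspose A := by
  rw [antitranspose, Matrix.transpose_mul, Matrix.submatrix_mul _ _ _ _ _ Fin.rev_bijective]
  rfl

end Antitranspose

theorem antitranspose_Mb_mul (x : ℤ) :
    antitranspose (Mb x) * !![0, 1; -1, 0] = !![0, 1; -1, 0] * Mb x := by
  simp [Mb, antitranspose_fin_two]

theorem antitranspose_prodB_mul (L : List ℤ) :
    antitranspose (prodB L) * !![0, 1; -1, 0] = Bmat L.reverse := by
  induction L with
  | nil => simp [prodB, Bmat, antitranspose_one]
  | cons x L ih =>
    calc antitranspose (prodB (x :: L)) * !![0, 1; -1, 0]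
        = antitranspose (Mb x) * (antitranspose (prodB L) * !![0, 1; -1, 0]) := by
          rw [prodB_cons, antitranspose_mul, Matrix.mul_assoc]
      _ = antitranspose (Mb x) * !![0, 1; -1, 0] * prodB L.reverse := by
          rw [ih, Bmat, Matrix.mul_assoc]
      _ = !![0, 1; -1, 0] * (Mb x * prodB L.reverse) := by
          rw [antitranspose_Mb_mul, Matrix.mul_assoc]
      _ = Bmat (x :: L).reverse := by
          rw [← prodB_append_singleton, ← List.reverse_cons, Bmat]

theorem Bmat_reverse (L : List ℤ) : Bmat L.reverse = antitranspose (Bmat L) := by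
  rw [Bmat.eq_def L, antitranspose_mul, antitranspose_fin_two, antitranspose_prodB_mul]

theorem ofFn_comp_rev {α : Type*} {n : ℕ} (f : Fin n → α) :
    List.ofFn (fun i => f i.rev) = (List.ofFn f).reverse := by
  rw [List.ofFn_eq_map, List.ofFn_eq_map, ← List.map_reverse, List.finRange_reverse, List.map_map]
  rfl

theorem cuspList_comp_rev (k : ℕ) (e : Fin k → ℤ) :
    cuspList k (fun i => e i.rev) = (cuspList k e).reverse := by
  have rev_endpoint_iff (i : Fin k) :
      (i.rev.val = 0 ∨ i.rev.val = k - 1) ↔ (i.val = 0 ∨ i.val = k - 1) := by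
    rw [Fin.val_rev]
    omega
  simp only [cuspList, ← ofFn_comp_rev, rev_endpoint_iff]

theorem stmt_5_general (k : ℕ) (e : Fin k → ℤ) :
    Bmat (cuspList k (fun i => e i.rev)) = antitranspose (Bmat (cuspList k e)) := by
  rw [cuspList_comp_rev, Bmat_reverse]

theorem stmt_5 (k : ℕ) (hk : 2 ≤ k) (e : Fin k → ℤ)
    (he : ∀ i, 2 ≤ e i) (h3 : ∃ j, 3 ≤ e j) (a b c d : ℤ)
    (heq : Bmat (cuspList k e) = !![a, b; c, d]) :
    Bmat (cuspList k (fun i => e i.rev)) = !![d, b; c, a] := by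
  rw [stmt_5_general, heq, antitranspose_fin_two]
end

section
/- Let k ≥ 1 and let e₁,…,e_k be integers with e_i ≥ 2 for all i and e_j ≥ 3 for at least one j. Then the 2×2 integer matrix A = [[0,-1],[1,e_k]] · [[0,-1],[1,e_{k-1}]] ⋯ [[0,-1],[1,e₁]] has trace at least 3. -/
/-!
Conjugation by the shear `[[1,1],[0,1]]` turns `[[0,-1],[1,x]]` into `[[1,x-2],[1,x-1]]`, which for
`2 ≤ x` dominates the identity matrix entrywise. Matrices dominating the identity form a monoid, and
multiplying a nonnegative matrix by them on either side can only increase its entries. Hence the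
trace of a product of such matrices is at least the trace `x` of each factor.
-/

open Matrix ConjAct

section EntrywiseOrder

variable {l m n R : Type*} [Semiring R] [PartialOrder R] [IsOrderedRing R]

theorem mul_apply_le_mul_apply [Fintype m] {A A' : Matrix l m R} {B B' : Matrix m n R}
    (hA : ∀ i j, A i j ≤ A' i j) (hB : ∀ i j, B i j ≤ B' i j)
    (hA' : ∀ i j, 0 ≤ A' i j) (hB₀ : ∀ i j, 0 ≤ B i j) (i : l) (j : n) :
    (A * B) i j ≤ (A' * B') i j :=
  Finset.sum_le_sum fun k _ ↦ mul_le_mul (hA i k) (hB k j) (hB₀ k j) (hA' i k)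

variable [DecidableEq n]

theorem one_apply_nonneg (i j : n) : 0 ≤ (1 : Matrix n n R) i j := by
  rw [one_apply]
  split_ifs <;> simp

variable [Fintype n]

variable (n R) in
/-- The monoid of square matrices that dominate the identity matrix entrywise. The entrywise order
is spelled out because `Matrix` carries no order instance for it. -/
def oneLESubmonoid : Submonoid (Matrix n n R) where
  carrier := {M | ∀ i j, (1 : Matrix n n R) i j ≤ M i j}
  one_mem' _ _ := le_rfl
  mul_mem' {A B} hA hB i j := by
    simpa only [one_mul] using mul_apply_le_mul_apply hA hB
      (fun i j ↦ (one_apply_nonneg i j).trans (hA i j)) one_apply_nonneg i j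

variable {M P Q : Matrix n n R}

theorem apply_nonneg_of_mem_oneLESubmonoid (hM : M ∈ oneLESubmonoid n R) (i j : n) : 0 ≤ M i j :=
  (one_apply_nonneg i j).trans (hM i j)

theorem apply_le_mul_mul_apply (hP : P ∈ oneLESubmonoid n R) (hQ : Q ∈ oneLESubmonoid n R)
    (hM : ∀ i j, 0 ≤ M i j) (i j : n) : M i j ≤ (P * M * Q) i j := by
  have le_left (i j : n) : M i j ≤ (P * M) i j := by
    simpa only [one_mul] using mul_apply_le_mul_apply hP (fun _ _ ↦ le_rfl)
      (apply_nonneg_of_mem_oneLESubmonoid hP) hM i j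
  simpa only [mul_one] using mul_apply_le_mul_apply le_left hQ
    (fun i j ↦ (hM i j).trans (le_left i j)) one_apply_nonneg i j

theorem trace_le_trace_list_prod {L : List (Matrix n n R)}
    (hL : ∀ N ∈ L, N ∈ oneLESubmonoid n R) (hM : M ∈ L) : M.trace ≤ L.prod.trace := by
  have hM₀ := apply_nonneg_of_mem_oneLESubmonoid (hL M hM)
  obtain ⟨s, t, rfl⟩ := List.append_of_mem hM
  have hs : s.prod ∈ oneLESubmonoid n R := Submonoid.list_prod_mem _ fun N hN ↦ hL N (by simp [hN])
  have ht : t.prod ∈ oneLESubmonoid n R := Submonoid.list_prod_mem _ fun N hN ↦ hL N (by simp [hN])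
  rw [List.prod_append, List.prod_cons, ← mul_assoc]
  exact Finset.sum_le_sum fun i _ ↦ apply_le_mul_mul_apply hs ht hM₀ i i

end EntrywiseOrder

theorem trace_conjAct_smul {n R : Type*} [Fintype n] [DecidableEq n] [CommSemiring R]
    (g : ConjAct (Matrix n n R)ˣ) (M : Matrix n n R) : (g • M).trace = M.trace :=
  trace_units_conj (ofConjAct g) M

/-- The shear `[[1,1],[0,1]]`, acting by conjugation; it makes `Mb x` nonnegative for `2 ≤ x`. -/
def shear : ConjAct (Matrix (Fin 2) (Fin 2) ℤ)ˣ :=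
  toConjAct ⟨!![1, 1; 0, 1], !![1, -1; 0, 1], by simp [one_fin_two], by simp [one_fin_two]⟩

theorem shear_smul_Mb (x : ℤ) : shear • Mb x = !![1, x - 2; 1, x - 1] := by
  change !![1, 1; 0, 1] * !![0, -1; 1, x] * !![1, -1; 0, 1] = _
  rw [mul_fin_two, mul_fin_two]
  ring_nf

theorem shear_smul_Mb_mem_oneLESubmonoid {x : ℤ} (hx : 2 ≤ x) :
    shear • Mb x ∈ oneLESubmonoid (Fin 2) ℤ := by
  have upper_right : 0 ≤ x - 2 := by linarith
  have lower_right : 1 ≤ x - 1 := by linarith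
  change ∀ i j, (1 : Matrix (Fin 2) (Fin 2) ℤ) i j ≤ (shear • Mb x) i j
  rw [shear_smul_Mb, one_fin_two]
  exact Fin.forall_fin_two.2 ⟨Fin.forall_fin_two.2 ⟨le_rfl, upper_right⟩,
    Fin.forall_fin_two.2 ⟨zero_le_one, lower_right⟩⟩

theorem shear_smul_prodB (L : List ℤ) :
    shear • prodB L = (L.map fun x ↦ shear • Mb x).reverse.prod := by
  rw [prodB, List.smul_prod', List.map_reverse, List.map_map]
  rfl

theorem trace_Mb (x : ℤ) : (Mb x).trace = x := by
  simp [Mb, trace_fin_two]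

theorem stmt_6_general {L : List ℤ} (hL : ∀ y ∈ L, 2 ≤ y) {x : ℤ} (hx : x ∈ L) :
    x ≤ (prodB L).trace := by
  have factors_mem : ∀ N ∈ (L.map fun y ↦ shear • Mb y).reverse, N ∈ oneLESubmonoid (Fin 2) ℤ := by
    simpa using fun y hy ↦ shear_smul_Mb_mem_oneLESubmonoid (hL y hy)
  calc
    x = (shear • Mb x).trace := by rw [trace_conjAct_smul, trace_Mb]
    _ ≤ (L.map fun y ↦ shear • Mb y).reverse.prod.trace :=
      trace_le_trace_list_prod factors_mem (List.mem_reverse.2 (List.mem_map_of_mem hx))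
    _ = (prodB L).trace := by rw [← shear_smul_prodB, trace_conjAct_smul]

theorem stmt_6 (k : ℕ) (hk : 1 ≤ k) (e : Fin k → ℤ)
    (he : ∀ i, 2 ≤ e i) (h3 : ∃ j, 3 ≤ e j) :
    3 ≤ Matrix.trace (prodB (List.ofFn e)) := by
  obtain ⟨j, hj⟩ := h3
  exact hj.trans (stmt_6_general (by simpa [List.mem_ofFn] using he) (by simp))
end

section
/- Let a, b, c, d be positive integers with ad − bc = 1, and let π be the group presented below. Then the abelianization π^{ab} of π is a finite group of order 16b. -/
/-- The relators of the fundamental group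
`⟨x₁,y₁,x₂,y₂ | x₁⁻¹y₁x₁ = y₁⁻¹, x₂⁻¹y₂x₂ = y₂⁻¹, x₂² = x₁^{2a}y₁^{c}, y₂ = x₁^{2b}y₁^{d}⟩`
of the link of the quotient-cusp classified by `[[a,b],[c,d]]`.
The generators `x₁, y₁, x₂, y₂` are indexed by `0, 1, 2, 3 : Fin 4`. -/
def quotientCuspRels (a b c d : ℕ) : Set (FreeGroup (Fin 4)) :=
  { (FreeGroup.of 0)⁻¹ * FreeGroup.of 1 * FreeGroup.of 0 * FreeGroup.of 1,
    (FreeGroup.of 2)⁻¹ * FreeGroup.of 3 * FreeGroup.of 2 * FreeGroup.of 3,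
    (FreeGroup.of 2) ^ 2 * ((FreeGroup.of 0) ^ (2 * a) * (FreeGroup.of 1) ^ c)⁻¹,
    FreeGroup.of 3 * ((FreeGroup.of 0) ^ (2 * b) * (FreeGroup.of 1) ^ d)⁻¹ }

/-!
Killing commutators turns a presentation with generators `α` into the quotient of `ℤ^α` by the
lattice spanned by the exponent vectors of the relators. When there are as many relators as
generators, the order of this quotient is therefore the absolute value of the determinant of the
matrix of exponents, as soon as that is nonzero. For the group of the quotient-cusp this matrix is
`4 × 4` with determinant `-16b`.
-/

open Module

section Lattice

variable {ι : Type*} [Fintype ι] [DecidableEq ι]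

theorem linearIndependent_of_basis_det_ne_zero {R M : Type*} [CommRing R] [IsDomain R]
    [AddCommGroup M] [Module R M] (b : Basis ι R M) {v : ι → M} (hv : b.det v ≠ 0) :
    LinearIndependent R v := by
  have hcols : LinearIndependent R (b.toMatrix v).col :=
    Matrix.linearIndependent_cols_of_det_ne_zero hv
  exact LinearIndependent.of_comp b.equivFun.toLinearMap hcols

theorem natCard_quotient_span_range_eq_natAbs_det {M : Type*} [AddCommGroup M] (b : Basis ι ℤ M)
    {v : ι → M} (hv : b.det v ≠ 0) :
    Nat.card (M ⧸ Submodule.span ℤ (Set.range v)) = (b.det v).natAbs := by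
  have : Module.Free ℤ M := .of_basis b
  have : Module.Finite ℤ M := .of_basis b
  have hli := linearIndependent_of_basis_det_ne_zero b hv
  let bv := Basis.span hli
  have hbv : (↑) ∘ bv = v := funext fun i => congrArg Subtype.val (Basis.span_apply hli i)
  rw [← Submodule.natAbs_det_basis_change b _ bv, hbv]

end Lattice

section Presentation

variable {α : Type*}

/-- The homomorphism sending a word to its vector of exponent sums, that is, the abelianization map
of the free group in coordinates. -/
noncomputable def exponentSum : FreeGroup α →* Multiplicative (α →₀ ℤ) :=
  FreeGroup.lift fun i => .ofAdd (.single i 1)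

@[simp]
theorem exponentSum_of (i : α) : exponentSum (.of i) = .ofAdd (.single i 1) :=
  FreeGroup.lift_apply_of

theorem lift_ofAdd_map_single {A : Type*} [AddCommGroup A] (f : (α →₀ ℤ) →ₗ[ℤ] A)
    (w : FreeGroup α) :
    FreeGroup.lift (fun i => Multiplicative.ofAdd (f (.single i 1))) w =
      .ofAdd (f (exponentSum w).toAdd) := by
  suffices FreeGroup.lift (fun i => Multiplicative.ofAdd (f (.single i 1))) =
      f.toAddMonoidHom.toMultiplicative.comp exponentSum from DFunLike.congr_fun this w
  ext i
  simp

/-- The lattice of linear relations that a set of relators imposes on the generators of the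
abelianized group. -/
noncomputable def relationLattice (rels : Set (FreeGroup α)) : Submodule ℤ (α →₀ ℤ) :=
  Submodule.span ℤ ((fun r => (exponentSum r).toAdd) '' rels)

variable (rels : Set (FreeGroup α))

/-- The images of the generators in the abelianized group, written additively. -/
def abelianizedGenerator (i : α) : Additive (Abelianization (PresentedGroup rels)) :=
  .ofMul (.of (.of i))

theorem linearCombination_exponentSum (w : FreeGroup α) :
    Finsupp.linearCombination ℤ (abelianizedGenerator rels) (exponentSum w).toAdd =
      .ofMul (.of (PresentedGroup.mk rels w)) := by
  let f : FreeGroup α →* Abelianization (PresentedGroup rels) :=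
    (AddMonoidHom.toMultiplicativeLeft
      (Finsupp.linearCombination ℤ (abelianizedGenerator rels)).toAddMonoidHom).comp exponentSum
  suffices f = Abelianization.of.comp (PresentedGroup.mk rels) from
    congrArg Additive.ofMul (DFunLike.congr_fun this w)
  ext i
  simp [f, abelianizedGenerator, PresentedGroup.of]

theorem relationLattice_le_ker_linearCombination :
    relationLattice rels ≤
      LinearMap.ker (Finsupp.linearCombination ℤ (abelianizedGenerator rels)) := by
  rw [relationLattice, Submodule.span_le]
  rintro _ ⟨r, hr, rfl⟩
  simp [linearCombination_exponentSum, PresentedGroup.one_of_mem hr]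

theorem lift_ofAdd_mkQ_single_eq_one {r : FreeGroup α} (hr : r ∈ rels) :
    FreeGroup.lift
      (fun i => Multiplicative.ofAdd ((relationLattice rels).mkQ (.single i 1))) r = 1 := by
  have hmem : (exponentSum r).toAdd ∈ relationLattice rels :=
    Submodule.subset_span (Set.mem_image_of_mem _ hr)
  rw [lift_ofAdd_map_single, Submodule.mkQ_apply,
    (Submodule.Quotient.mk_eq_zero _).2 hmem, ofAdd_zero]

/-- The abelianized group is presented by the relation lattice: the class of the `i`-th basis vector
of `ℤ^α` corresponds to the `i`-th generator. -/
noncomputable def quotientRelationLatticeEquiv :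
    ((α →₀ ℤ) ⧸ relationLattice rels) ≃ₗ[ℤ] Additive (Abelianization (PresentedGroup rels)) :=
  LinearEquiv.ofLinearMap
    ((relationLattice rels).liftQ (Finsupp.linearCombination ℤ (abelianizedGenerator rels))
      (relationLattice_le_ker_linearCombination rels))
    (Abelianization.lift (PresentedGroup.toGroup fun _ =>
      lift_ofAdd_mkQ_single_eq_one rels)).toAdditiveLeft.toIntLinearMap
    (by
      apply LinearMap.toAddMonoidHom_injective
      apply AddMonoidHom.toMultiplicative.injective
      ext i
      simp [abelianizedGenerator])
    (by
      ext i
      simp [abelianizedGenerator])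

end Presentation

section SquarePresentation

variable {ι : Type*}

/-- The matrix of relations presenting the abelianized group, with one row per relator and one
column per generator; its entries are exponent sums. -/
noncomputable def relationMatrix {κ : Type*} (r : κ → FreeGroup ι) : Matrix κ ι ℤ :=
  .of fun i j => (exponentSum (r i)).toAdd j

variable [Fintype ι] [DecidableEq ι]

theorem basis_det_exponentSum_eq_det_relationMatrix (r : ι → FreeGroup ι) :
    (Finsupp.basisSingleOne (R := ℤ)).det (fun i => (exponentSum (r i)).toAdd) =
      (relationMatrix r).det := by
  rw [Basis.det_apply, ← Matrix.det_transpose]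
  rfl

theorem natCard_abelianization_presentedGroup_range (r : ι → FreeGroup ι)
    (hr : (relationMatrix r).det ≠ 0) :
    Nat.card (Abelianization (PresentedGroup (Set.range r))) = (relationMatrix r).det.natAbs := by
  have hlattice : relationLattice (Set.range r) =
      Submodule.span ℤ (Set.range fun i => (exponentSum (r i)).toAdd) := by
    rw [relationLattice, ← Set.range_comp]
    rfl
  rw [← basis_det_exponentSum_eq_det_relationMatrix] at hr ⊢
  calc
    _ = Nat.card ((ι →₀ ℤ) ⧸ relationLattice (Set.range r)) :=
      (Nat.card_congr (quotientRelationLatticeEquiv _).toEquiv).symm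
    _ = _ := by rw [hlattice, natCard_quotient_span_range_eq_natAbs_det _ hr]

end SquarePresentation

section QuotientCusp

open FreeGroup

variable (a b c d : ℕ)

/-- The relators of `quotientCuspRels`, as a family in the order of the presentation. -/
def quotientCuspRelator : Fin 4 → FreeGroup (Fin 4) :=
  ![(of 0)⁻¹ * of 1 * of 0 * of 1,
    (of 2)⁻¹ * of 3 * of 2 * of 3,
    of 2 ^ 2 * (of 0 ^ (2 * a) * of 1 ^ c)⁻¹,
    of 3 * (of 0 ^ (2 * b) * of 1 ^ d)⁻¹]

theorem range_quotientCuspRelator :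
    Set.range (quotientCuspRelator a b c d) = quotientCuspRels a b c d := by
  simp only [quotientCuspRelator, quotientCuspRels, Matrix.range_cons, Matrix.range_empty,
    Set.singleton_union, Set.union_empty]

theorem relationMatrix_quotientCuspRelator :
    relationMatrix (quotientCuspRelator a b c d) =
      !![0, 2, 0, 0;
         0, 0, 0, 2;
         -(2 * a : ℤ), -(c : ℤ), 2, 0;
         -(2 * b : ℤ), -(d : ℤ), 0, 1] := by
  ext i j
  fin_cases i <;> fin_cases j <;> simp [relationMatrix, quotientCuspRelator]

theorem det_relationMatrix_quotientCuspRelator :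
    (relationMatrix (quotientCuspRelator a b c d)).det = -(16 * b) := by
  rw [relationMatrix_quotientCuspRelator]
  calc
    _ = -2 * !![0, 0, 2; -(2 * a : ℤ), 2, 0; -(2 * b : ℤ), 0, 1].det := by
      simp [Matrix.det_succ_row_zero, Fin.sum_univ_succ, Fin.succAbove]
    _ = -(16 * b) := by
      simp only [Matrix.det_fin_three, Matrix.of_apply, Matrix.cons_val]
      ring

end QuotientCusp

theorem stmt_7_general (a b c d : ℕ) (hb : 0 < b) :
    Finite (Abelianization (PresentedGroup (quotientCuspRels a b c d))) ∧
      Nat.card (Abelianization (PresentedGroup (quotientCuspRels a b c d))) = 16 * b := by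
  have hdet := det_relationMatrix_quotientCuspRelator a b c d
  have hcard : Nat.card (Abelianization (PresentedGroup (quotientCuspRels a b c d))) = 16 * b := by
    rw [← range_quotientCuspRelator, natCard_abelianization_presentedGroup_range _ (by lia), hdet]
    lia
  exact ⟨Nat.finite_of_card_ne_zero (by lia), hcard⟩

theorem stmt_7 (a b c d : ℕ) (ha : 0 < a) (hb : 0 < b) (hc : 0 < c) (hd : 0 < d)
    (hdet : a * d = b * c + 1) :
    Finite (Abelianization (PresentedGroup (quotientCuspRels a b c d))) ∧
      Nat.card (Abelianization (PresentedGroup (quotientCuspRels a b c d))) = 16 * b :=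
  stmt_7_general a b c d hb
end

section
/- Let π be the presented group below and set s = (x₁x₂)² x₁^{−2a−2} y₁^{−c} ∈ π. Then the commutator subgroup of π (the kernel of the canonical map π → π^{ab}) equals the subgroup of π generated by the three elements s, x₁^{4b}, and y₁². -/
/-!
The subgroups `H = ⟨x₁, y₁⟩` and `K = ⟨x₂, y₂⟩` are images of the Klein bottle group, so their
commutator subgroups are `⟨y₁²⟩` and `⟨y₂²⟩`. As the matrix is invertible, `x₁², y₁, x₂², y₂` all
lie in `H ⊓ K`. Hence `N = ⟨y₁², y₂²⟩` is normal, being normalized by `H` and by `K`, and `H ⊓ K`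
becomes central modulo `N`. The quotient by `N` is thus generated by `x₁`, `x₂` and central
elements, and `x₁²`, `x₂²` are central, so both `x₁` and `x₂` invert `⁅x₁, x₂⁆`, and this single
commutator generates the commutator subgroup of the quotient. Finally `s = ⁅x₁x₂, x₁⁆` agrees with
`⁅x₁, x₂⁆` modulo `N`, and `y₂² = x₁^{4b} y₁^{2d}`.
-/

section

open Subgroup
open scoped commutatorElement

variable {G Q : Type*} [Group G] [Group Q]

theorem commutator_closure_le {S : Set G} {K : Subgroup G} (hS : S ⊆ normalizer (K : Set G))
    (h : ∀ s ∈ S, ∀ t ∈ S, ⁅s, t⁆ ∈ K) : ⁅closure S, closure S⁆ ≤ K := by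
  have conj_mem {g k : G} (hg : g ∈ closure S) (hk : k ∈ K) : g * k * g⁻¹ ∈ K :=
    (mem_normalizer_iff.1 ((closure_le _).2 hS hg) k).1 hk
  have conj_mem' {g k : G} (hg : g ∈ closure S) (hk : k ∈ K) : g⁻¹ * k * g ∈ K := by
    simpa only [inv_inv] using conj_mem (inv_mem hg) hk
  refine commutator_le.2 fun g hg k hk => ?_
  induction hg, hk using closure_induction₂ with
  | mem s t hs ht => exact h s hs t ht
  | one_left t _ => simpa only [commutatorElement_one_left] using one_mem K
  | one_right s _ => simpa only [commutatorElement_one_right] using one_mem K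
  | mul_left s₁ s₂ t hs₁ _ _ h₁ h₂ =>
    rw [commutatorElement_mul_left_eq_conj_mul]
    exact mul_mem (conj_mem hs₁ h₂) h₁
  | mul_right t₁ t₂ s ht₁ _ _ h₁ h₂ =>
    rw [commutatorElement_mul_right_eq_mul_conj, mul_assoc, mul_assoc, ← mul_assoc t₁]
    exact mul_mem h₁ (conj_mem ht₁ h₂)
  | inv_left s t hs _ h =>
    rw [commutatorElement_inv_left, ← commutatorElement_inv]
    exact conj_mem' hs (inv_mem h)
  | inv_right s t _ ht h =>
    rw [commutatorElement_inv_right, ← commutatorElement_inv]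
    exact conj_mem' ht (inv_mem h)

theorem mem_normalizer_zpowers_of_semiconjBy {g t u : G} (h : SemiconjBy g t u)
    (hu : zpowers u = zpowers t) : g ∈ normalizer (zpowers t : Set G) := by
  have hconj : MulAut.conj g t = u := mul_inv_eq_of_eq_mul h.eq
  rw [mem_normalizer_iff_map_conj_eq, MonoidHom.map_zpowers, MonoidHom.coe_coe, hconj, hu]

theorem commute_sq_of_semiconjBy_inv {x y : G} (h : SemiconjBy x y y⁻¹) : Commute (x ^ 2) y := by
  have h' : SemiconjBy x y⁻¹ y := by simpa only [inv_inv] using h.inv_right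
  rw [sq]
  exact h'.mul_left h

theorem commutator_closure_pair_of_semiconjBy_inv {x y : G} (h : SemiconjBy x y y⁻¹) :
    ⁅closure {x, y}, closure {x, y}⁆ = zpowers (y ^ 2) := by
  have hxy : ⁅x, y⁆ = (y ^ 2)⁻¹ := by rw [commutatorElement_def, h.eq]; group
  have hmem : ⁅x, y⁆ ∈ zpowers (y ^ 2) := hxy ▸ inv_mem (mem_zpowers _)
  apply le_antisymm
  · refine commutator_closure_le ?_ ?_
    · rintro g (rfl | rfl)
      · exact mem_normalizer_zpowers_of_semiconjBy (h.pow_right 2) (by rw [inv_pow, zpowers_inv])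
      · exact mem_normalizer_zpowers_of_semiconjBy (Commute.self_pow g 2) rfl
    · rintro g (rfl | rfl) k (rfl | rfl)
      · simp only [commutatorElement_self, one_mem]
      · exact hmem
      · simpa only [commutatorElement_inv] using inv_mem hmem
      · simp only [commutatorElement_self, one_mem]
  · rw [zpowers_le, ← inv_mem_iff, ← hxy]
    exact commutator_mem_commutator (mem_closure_of_mem (.inl rfl)) (mem_closure_of_mem (.inr rfl))

theorem semiconjBy_commutatorElement_inv_of_commute_sq {x z : G} (h : Commute (x ^ 2) z) :
    SemiconjBy x ⁅x, z⁆ ⁅x, z⁆⁻¹ := by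
  calc x * ⁅x, z⁆ = x ^ 2 * z * x⁻¹ * z⁻¹ := by simp only [commutatorElement_def, sq, mul_assoc]
    _ = z * x ^ 2 * x⁻¹ * z⁻¹ := by rw [h.eq]
    _ = ⁅x, z⁆⁻¹ * x := by rw [commutatorElement_def]; group

theorem commutatorElement_mul_left_self_of_commute_sq {x z : G} (h : Commute (x ^ 2) z) :
    ⁅x * z, x⁆ = ⁅x, z⁆ := by
  calc ⁅x * z, x⁆ = x * z * x * (z⁻¹ * (x ^ 2)⁻¹) := by rw [commutatorElement_def]; group
    _ = x * z * x * ((x ^ 2)⁻¹ * z⁻¹) := by rw [h.inv_inv.eq]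
    _ = ⁅x, z⁆ := by rw [commutatorElement_def]; group

theorem commutator_eq_zpowers_of_commute_sq {x z : G} (hgen : closure {x, z} ⊔ center G = ⊤)
    (hxz : Commute (x ^ 2) z) (hzx : Commute (z ^ 2) x) : commutator G = zpowers ⁅x, z⁆ := by
  have hmem : ⁅x, z⁆ ∈ zpowers ⁅x, z⁆ := mem_zpowers _
  apply le_antisymm
  · rw [_root_.commutator_def, ← hgen, ← closure_eq (center G), ← Subgroup.closure_union]
    refine commutator_closure_le ?_ ?_
    · rintro g ((rfl | rfl) | hg)
      · exact mem_normalizer_zpowers_of_semiconjBy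
          (semiconjBy_commutatorElement_inv_of_commute_sq hxz) zpowers_inv
      · rw [← commutatorElement_inv, zpowers_inv]
        exact mem_normalizer_zpowers_of_semiconjBy
          (semiconjBy_commutatorElement_inv_of_commute_sq hzx) zpowers_inv
      · exact center_le_normalizer _ hg
    · have mem_of_commute {g k : G} (h : Commute g k) : ⁅g, k⁆ ∈ zpowers ⁅x, z⁆ :=
        h.commutator_eq ▸ one_mem _
      rintro g ((rfl | rfl) | hg) k ((rfl | rfl) | hk)
      · exact mem_of_commute (.refl _)
      · exact hmem
      · exact mem_of_commute (mem_center_iff.1 hk g)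
      · simpa only [commutatorElement_inv] using inv_mem hmem
      · exact mem_of_commute (.refl _)
      · exact mem_of_commute (mem_center_iff.1 hk g)
      all_goals exact mem_of_commute (mem_center_iff.1 hg _).symm
  · rw [zpowers_le]
    exact commutator_mem_commutator (mem_top x) (mem_top z)

theorem normal_commutator_sup_commutator {H K : Subgroup G} (hsup : H ⊔ K = ⊤)
    (hH : ⁅H, H⁆ ≤ K) (hK : ⁅K, K⁆ ≤ H) : (⁅H, H⁆ ⊔ ⁅K, K⁆).Normal := by
  have hNH : ⁅H, H⁆ ⊔ ⁅K, K⁆ ≤ H := sup_le (commutator_le_self H) hK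
  have hNK : ⁅H, H⁆ ⊔ ⁅K, K⁆ ≤ K := sup_le hH (commutator_le_self K)
  rw [← normalizer_eq_top_iff, eq_top_iff, ← hsup, sup_le_iff,
    le_normalizer_iff_commutator_le_right, le_normalizer_iff_commutator_le_right]
  exact ⟨(commutator_mono le_rfl hNH).trans le_sup_left,
    (commutator_mono le_rfl hNK).trans le_sup_right⟩

theorem map_inf_le_center {H K : Subgroup G} (hsup : H ⊔ K = ⊤) {f : G →* Q}
    (hf : Function.Surjective f) (hH : ⁅H, H⁆ ≤ f.ker) (hK : ⁅K, K⁆ ≤ f.ker) :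
    (H ⊓ K).map f ≤ center Q := by
  have le_centralizer {L : Subgroup G} (hL : ⁅L, L⁆ ≤ f.ker) (hle : H ⊓ K ≤ L) :
      L.map f ≤ centralizer ((H ⊓ K).map f : Set Q) := by
    rw [← commutator_eq_bot_iff_le_centralizer, ← map_commutator, Subgroup.map_eq_bot_iff]
    exact (commutator_mono le_rfl hle).trans hL
  rw [← commutator_top_left_eq_bot_iff_le_center, commutator_eq_bot_iff_le_centralizer,
    ← map_top_of_surjective f hf, ← hsup, Subgroup.map_sup]
  exact sup_le (le_centralizer hH inf_le_left) (le_centralizer hK inf_le_right)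

theorem map_commutator_of_surjective {f : G →* Q} (hf : Function.Surjective f) :
    (commutator G).map f = commutator Q := by
  rw [_root_.commutator_def, map_commutator, map_top_of_surjective f hf, _root_.commutator_def]

theorem commutator_eq_zpowers_sup_of_semiconjBy_inv {x y z w : G} (hxy : SemiconjBy x y y⁻¹)
    (hzw : SemiconjBy z w w⁻¹) (hsup : closure {x, y} ⊔ closure {z, w} = ⊤)
    (hx : x ^ 2 ∈ closure {z, w}) (hy : y ∈ closure {z, w})
    (hz : z ^ 2 ∈ closure {x, y}) (hw : w ∈ closure {x, y}) :
    commutator G = zpowers ⁅x * z, x⁆ ⊔ (zpowers (y ^ 2) ⊔ zpowers (w ^ 2)) := by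
  set H : Subgroup G := closure {x, y}
  set K : Subgroup G := closure {z, w}
  have hHH : ⁅H, H⁆ = zpowers (y ^ 2) := commutator_closure_pair_of_semiconjBy_inv hxy
  have hKK : ⁅K, K⁆ = zpowers (w ^ 2) := commutator_closure_pair_of_semiconjBy_inv hzw
  have hnormal : (⁅H, H⁆ ⊔ ⁅K, K⁆).Normal := normal_commutator_sup_commutator hsup
    (hHH.trans_le (zpowers_le.2 (pow_mem hy 2))) (hKK.trans_le (zpowers_le.2 (pow_mem hw 2)))
  rw [← hHH, ← hKK]
  let φ := QuotientGroup.mk' (⁅H, H⁆ ⊔ ⁅K, K⁆)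
  have hφ : Function.Surjective φ := QuotientGroup.mk'_surjective _
  have hker : φ.ker = ⁅H, H⁆ ⊔ ⁅K, K⁆ := QuotientGroup.ker_mk' _
  have hker_le : φ.ker ≤ commutator G :=
    hker.trans_le (sup_le (commutator_mono le_top le_top) (commutator_mono le_top le_top))
  have central {g : G} (hgH : g ∈ H) (hgK : g ∈ K) : φ g ∈ center _ :=
    map_inf_le_center hsup hφ (le_sup_left.trans_eq hker.symm) (le_sup_right.trans_eq hker.symm)
      (mem_map_of_mem φ ⟨hgH, hgK⟩)
  have hgen : closure {φ x, φ z} ⊔ center _ = ⊤ := by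
    rw [eq_top_iff, ← map_top_of_surjective φ hφ, ← hsup, Subgroup.map_sup, MonoidHom.map_closure,
      MonoidHom.map_closure, Set.image_pair, Set.image_pair, sup_le_iff, closure_le, closure_le,
      Set.pair_subset_iff, Set.pair_subset_iff]
    exact ⟨⟨mem_sup_left (mem_closure_of_mem (.inl rfl)),
        mem_sup_right (central (mem_closure_of_mem (.inr rfl)) hy)⟩,
      mem_sup_left (mem_closure_of_mem (.inr rfl)),
      mem_sup_right (central hw (mem_closure_of_mem (.inr rfl)))⟩
  have hxz : Commute (φ x ^ 2) (φ z) := (mem_center_iff.1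
    (map_pow φ x 2 ▸ central (pow_mem (mem_closure_of_mem (.inl rfl)) 2) hx) (φ z)).symm
  have hzx : Commute (φ z ^ 2) (φ x) := (mem_center_iff.1
    (map_pow φ z 2 ▸ central hz (pow_mem (mem_closure_of_mem (.inl rfl)) 2)) (φ x)).symm
  have hmap : (commutator G).map φ = (zpowers ⁅x * z, x⁆).map φ := by
    rw [map_commutator_of_surjective hφ, commutator_eq_zpowers_of_commute_sq hgen hxz hzx,
      MonoidHom.map_zpowers, map_commutatorElement, map_mul,
      commutatorElement_mul_left_self_of_commute_sq hxz]
  rwa [map_eq_map_iff, sup_of_le_left hker_le, hker] at hmap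

theorem mem_of_zpow_mul_zpow_mem {u v : G} (huv : Commute u v) {K : Subgroup G} {a b c d : ℤ}
    (hdet : IsUnit (a * d - b * c)) (h₁ : u ^ a * v ^ c ∈ K) (h₂ : u ^ b * v ^ d ∈ K) :
    u ∈ K := by
  have cramer : u ^ (a * d - b * c) = (u ^ a * v ^ c) ^ d * (u ^ b * v ^ d) ^ (-c) := by
    have huv' : Commute (v ^ (c * d)) (u ^ (b * -c)) := huv.symm.zpow_zpow _ _
    rw [(huv.zpow_zpow a c).mul_zpow, (huv.zpow_zpow b d).mul_zpow, ← zpow_mul, ← zpow_mul,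
      ← zpow_mul, ← zpow_mul, mul_assoc, huv'.left_comm, ← zpow_add, ← mul_assoc, ← zpow_add,
      sub_eq_add_neg, mul_neg, mul_neg, mul_comm d c, add_neg_cancel, zpow_zero, mul_one]
  have hmem : u ^ (a * d - b * c) ∈ K := cramer ▸ mul_mem (zpow_mem h₁ d) (zpow_mem h₂ (-c))
  obtain hone | hneg := Int.isUnit_iff.1 hdet
  · simpa only [hone, zpow_one] using hmem
  · simpa only [hneg, zpow_neg_one, inv_mem_iff] using hmem

theorem closure_zpow_mul_zpow_sq_pair {u v : G} (huv : Commute u v) (b d : ℤ) :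
    closure {u ^ (2 * b), v ^ 2} = zpowers (v ^ 2) ⊔ zpowers ((u ^ b * v ^ d) ^ 2) := by
  have hsq : (u ^ b * v ^ d) ^ 2 = u ^ (2 * b) * (v ^ 2) ^ d := by
    rw [(huv.zpow_zpow b d).mul_pow, ← zpow_natCast, ← zpow_natCast, ← zpow_natCast, ← zpow_mul,
      ← zpow_mul, ← zpow_mul, Nat.cast_ofNat, mul_comm b, mul_comm d]
  apply le_antisymm
  · rw [closure_le, Set.pair_subset_iff, eq_mul_inv_of_mul_eq hsq.symm]
    have hv : v ^ 2 ∈ zpowers (v ^ 2) ⊔ zpowers ((u ^ b * v ^ d) ^ 2) :=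
      mem_sup_left (mem_zpowers _)
    exact ⟨mul_mem (mem_sup_right (mem_zpowers _)) (inv_mem (zpow_mem hv d)), hv⟩
  · have hu : u ^ (2 * b) ∈ closure {u ^ (2 * b), v ^ 2} := mem_closure_of_mem (.inl rfl)
    have hv : v ^ 2 ∈ closure {u ^ (2 * b), v ^ 2} := mem_closure_of_mem (.inr rfl)
    exact sup_le (zpowers_le.2 hv) (zpowers_le.2 (hsq ▸ mul_mem hu (zpow_mem hv d)))

theorem sq_mul_mul_inv_mul_inv_eq_commutatorElement {x y z : G} (hxy : Commute (x ^ 2) y) {a c : ℤ}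
    (hz : z ^ 2 = x ^ (2 * a) * y ^ c) :
    (x * z) ^ 2 * (x ^ (2 * a + 2))⁻¹ * (y ^ c)⁻¹ = ⁅x * z, x⁆ := by
  have hxz : y ^ c * x ^ (2 * a + 2) = x ^ 2 * z ^ 2 := by
    have hpow : x ^ (2 * a + 2) = (x ^ 2) ^ (a + 1) := by
      rw [← zpow_ofNat x 2, ← zpow_mul, mul_add, mul_one]
    rw [hz, hpow, ← (hxy.zpow_zpow (a + 1) c).eq, ← hpow, add_comm, zpow_add, zpow_ofNat, mul_assoc]
  calc (x * z) ^ 2 * (x ^ (2 * a + 2))⁻¹ * (y ^ c)⁻¹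
      = (x * z) ^ 2 * (x ^ 2 * z ^ 2)⁻¹ := by rw [mul_assoc, ← mul_inv_rev, hxz]
    _ = ⁅x * z, x⁆ := by rw [commutatorElement_def, sq (x * z)]; group

theorem semiconjBy_inv_of_inv_mul_mul_eq_inv {x y : G} (h : x⁻¹ * y * x = y⁻¹) :
    SemiconjBy x y y⁻¹ := by
  have h' : SemiconjBy x y⁻¹ y := by rw [SemiconjBy, ← h]; group
  simpa only [inv_inv] using h'.inv_right

theorem stmt_8_general {a b c d : ℤ} (hdet : IsUnit (a * d - b * c)) {x₁ y₁ x₂ y₂ : G}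
    (hgen : closure {x₁, y₁, x₂, y₂} = ⊤)
    (h₁ : x₁⁻¹ * y₁ * x₁ = y₁⁻¹) (h₂ : x₂⁻¹ * y₂ * x₂ = y₂⁻¹)
    (hx₂ : x₂ ^ 2 = x₁ ^ (2 * a) * y₁ ^ c) (hy₂ : y₂ = x₁ ^ (2 * b) * y₁ ^ d) :
    commutator G =
      closure {(x₁ * x₂) ^ 2 * (x₁ ^ (2 * a + 2))⁻¹ * (y₁ ^ c)⁻¹, x₁ ^ (4 * b), y₁ ^ 2} := by
  have hxy₁ : SemiconjBy x₁ y₁ y₁⁻¹ := semiconjBy_inv_of_inv_mul_mul_eq_inv h₁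
  have hxy₂ : SemiconjBy x₂ y₂ y₂⁻¹ := semiconjBy_inv_of_inv_mul_mul_eq_inv h₂
  have hcomm : Commute (x₁ ^ 2) y₁ := commute_sq_of_semiconjBy_inv hxy₁
  have hsup : closure {x₁, y₁} ⊔ closure {x₂, y₂} = ⊤ := by
    rw [← Subgroup.closure_union, Set.insert_union, Set.singleton_union, hgen]
  have hmem₁ (m n : ℤ) : x₁ ^ (2 * m) * y₁ ^ n ∈ closure {x₁, y₁} :=
    mul_mem (zpow_mem (mem_closure_of_mem (.inl rfl)) _)
      (zpow_mem (mem_closure_of_mem (.inr rfl)) n)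
  have hsq_zpow (n : ℤ) : x₁ ^ (2 * n) = (x₁ ^ 2) ^ n := by rw [zpow_mul, zpow_ofNat]
  have hx₂_mem : (x₁ ^ 2) ^ a * y₁ ^ c ∈ closure {x₂, y₂} := by
    rw [← hsq_zpow, ← hx₂]
    exact pow_mem (mem_closure_of_mem (.inl rfl)) 2
  have hy₂_mem : (x₁ ^ 2) ^ b * y₁ ^ d ∈ closure {x₂, y₂} := by
    rw [← hsq_zpow, ← hy₂]
    exact mem_closure_of_mem (.inr rfl)
  have hx₁ : x₁ ^ 2 ∈ closure {x₂, y₂} := mem_of_zpow_mul_zpow_mem hcomm hdet hx₂_mem hy₂_mem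
  have hy₁ : y₁ ∈ closure {x₂, y₂} := by
    refine mem_of_zpow_mul_zpow_mem hcomm.symm (a := d) (b := c) (c := b) (d := a) ?_ ?_ ?_
    · rwa [mul_comm d, mul_comm c]
    · rwa [← (hcomm.zpow_zpow b d).eq]
    · rwa [← (hcomm.zpow_zpow a c).eq]
  have hN : closure {x₁ ^ (4 * b), y₁ ^ 2} = zpowers (y₁ ^ 2) ⊔ zpowers (y₂ ^ 2) := by
    have hfour : 4 * b = 2 * (2 * b) := by ring
    rw [hfour, hy₂, hsq_zpow (2 * b), hsq_zpow b, closure_zpow_mul_zpow_sq_pair hcomm]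
  rw [sq_mul_mul_inv_mul_inv_eq_commutatorElement hcomm hx₂, Set.insert_eq,
    Subgroup.closure_union, ← zpowers_eq_closure, hN]
  exact commutator_eq_zpowers_sup_of_semiconjBy_inv hxy₁ hxy₂ hsup hx₁ hy₁ (hx₂ ▸ hmem₁ a c)
    (hy₂ ▸ hmem₁ b d)

end

namespace quotientCuspRels

open PresentedGroup

variable (a b c d : ℕ)

theorem closure_of : Subgroup.closure {of 0, of 1, of 2, of 3} =
    (⊤ : Subgroup (PresentedGroup (quotientCuspRels a b c d))) := by
  rw [← closure_range_of]
  congr 1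
  ext g
  simp [Fin.exists_fin_succ, eq_comm]

theorem of_zero_inv_mul_of_one_mul_of_zero :
    (of 0)⁻¹ * of 1 * of 0 = (of 1 : PresentedGroup (quotientCuspRels a b c d))⁻¹ :=
  eq_inv_of_mul_eq_one_left <| one_of_mem (rels := quotientCuspRels a b c d) (.inl rfl)

theorem of_two_inv_mul_of_three_mul_of_two :
    (of 2)⁻¹ * of 3 * of 2 = (of 3 : PresentedGroup (quotientCuspRels a b c d))⁻¹ :=
  eq_inv_of_mul_eq_one_left <| one_of_mem (rels := quotientCuspRels a b c d) (.inr (.inl rfl))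

theorem of_two_sq :
    of 2 ^ 2 = (of 0 ^ (2 * a) * of 1 ^ c : PresentedGroup (quotientCuspRels a b c d)) :=
  mk_eq_mk_of_mul_inv_mem (.inr (.inr (.inl rfl)))

theorem of_three :
    of 3 = (of 0 ^ (2 * b) * of 1 ^ d : PresentedGroup (quotientCuspRels a b c d)) :=
  mk_eq_mk_of_mul_inv_mem (.inr (.inr (.inr rfl)))

end quotientCuspRels

theorem stmt_8 (a b c d : ℕ) (ha : 0 < a) (hb : 0 < b) (hc : 0 < c) (hd : 0 < d)
    (hdet : a * d = b * c + 1) :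
    commutator (PresentedGroup (quotientCuspRels a b c d)) =
      Subgroup.closure
        { ((PresentedGroup.of 0 * PresentedGroup.of 2) ^ 2 *
            ((PresentedGroup.of 0) ^ (2 * a + 2))⁻¹ * ((PresentedGroup.of 1) ^ c)⁻¹ :
            PresentedGroup (quotientCuspRels a b c d)),
          (PresentedGroup.of 0) ^ (4 * b), (PresentedGroup.of 1) ^ 2 } := by
  have hdet' : IsUnit (a * d - b * c : ℤ) := Int.isUnit_iff.2 <| .inl <| by lia
  exact_mod_cast stmt_8_general hdet' (quotientCuspRels.closure_of a b c d)
    (quotientCuspRels.of_zero_inv_mul_of_one_mul_of_zero a b c d)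
    (quotientCuspRels.of_two_inv_mul_of_three_mul_of_two a b c d)
    (by exact_mod_cast quotientCuspRels.of_two_sq a b c d)
    (by exact_mod_cast quotientCuspRels.of_three a b c d)
end

section
/- In the presented group π below, with z = x₁x₂, the conjugation formulas z⁻¹ x₁^{4b} z = x₁^{4b(ad+bc)} y₁^{4bcd} and z⁻¹ y₁² z = x₁^{8ab} y₁^{2(ad+bc)} hold. (Thus z acts on the free abelian subgroup generated by x₁^{4b} and y₁² by the matrix [[ad+bc, 2a],[2bcd, ad+bc]].) -/
/-!
Put `p = x₁²` and `q = y₁`, which commute. Conjugation by `x₂` fixes `x₂² = p ^ a * q ^ c` and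
inverts `y₂ = p ^ b * q ^ d`. On exponent vectors these two elements are the columns of
`M = [[a, b], [c, d]]`, so conjugation by `x₂` preserves `⟨p, q⟩` and acts on it by
`M * diag(1, -1) * M⁻¹ = [[ad + bc, -2ab], [2cd, -(ad + bc)]]`. Conjugation by `x₁` acts by
`diag(1, -1)`, and the product of the two matrices describes conjugation by `x₁ * x₂`.
-/

section CommutingElements

variable {G : Type*} [Group G] {p q : G}

lemma zpow_mul_zpow_mul_zpow_mul_zpow_of_commute (h : Commute p q) (i j k l : ℤ) :
    (p ^ i * q ^ j) * (p ^ k * q ^ l) = p ^ (i + k) * q ^ (j + l) := by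
  rw [(h.symm.zpow_zpow j k).mul_mul_mul_comm, ← zpow_add, ← zpow_add]

lemma zpow_mul_zpow_zpow_of_commute (h : Commute p q) (i j n : ℤ) :
    (p ^ i * q ^ j) ^ n = p ^ (i * n) * q ^ (j * n) := by
  rw [(h.zpow_zpow i j).mul_zpow, ← zpow_mul, ← zpow_mul]

lemma zpow_mul_zpow_of_det_eq_one (h : Commute p q) {a b c d : ℤ} (hdet : a * d - b * c = 1) :
    (p ^ a * q ^ c) ^ d * (p ^ b * q ^ d) ^ (-c) = p ∧
      (p ^ a * q ^ c) ^ (-b) * (p ^ b * q ^ d) ^ a = q := by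
  simp only [zpow_mul_zpow_zpow_of_commute h, zpow_mul_zpow_mul_zpow_mul_zpow_of_commute h]
  constructor
  · rw [show a * d + b * -c = 1 by linarith, show c * d + d * -c = 0 by ring,
      zpow_one, zpow_zero, mul_one]
  · rw [show a * -b + b * a = 0 by ring, show c * -b + d * a = 1 by linarith,
      zpow_one, zpow_zero, one_mul]

lemma map_eq_zpow_mul_zpow_of_map_eq_self_of_map_eq_inv (h : Commute p q) {a b c d : ℤ}
    (hdet : a * d - b * c = 1) (f : G →* G) (hfix : f (p ^ a * q ^ c) = p ^ a * q ^ c)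
    (hinv : f (p ^ b * q ^ d) = (p ^ b * q ^ d)⁻¹) :
    f p = p ^ (a * d + b * c) * q ^ (2 * c * d) ∧
      f q = p ^ (-(2 * a * b)) * q ^ (-(a * d + b * c)) := by
  obtain ⟨hp, hq⟩ := zpow_mul_zpow_of_det_eq_one h hdet
  have hfp : f p = (p ^ a * q ^ c) ^ d * (p ^ b * q ^ d) ^ c := by
    conv_lhs => rw [← hp]
    rw [map_mul, map_zpow, map_zpow, hfix, hinv, inv_zpow', neg_neg]
  have hfq : f q = (p ^ a * q ^ c) ^ (-b) * (p ^ b * q ^ d) ^ (-a) := by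
    conv_lhs => rw [← hq]
    rw [map_mul, map_zpow, map_zpow, hfix, hinv, inv_zpow']
  simp only [hfp, hfq, zpow_mul_zpow_zpow_of_commute h,
    zpow_mul_zpow_mul_zpow_mul_zpow_of_commute h]
  constructor <;> congr 2 <;> ring

lemma commute_sq_of_conj_eq_inv {x y : G} (h : x⁻¹ * y * x = y⁻¹) : Commute (x ^ 2) y := by
  have hxy : SemiconjBy x y⁻¹ y := by rw [SemiconjBy, ← h]; group
  have hyx : SemiconjBy x y y⁻¹ := by simpa only [inv_inv] using hxy.inv_right
  rw [pow_two]
  exact hxy.mul_left hyx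

end CommutingElements

/-- The defining relations of the fundamental group of the link of the quotient-cusp classified by
`[[a, b], [c, d]]`, imposed on elements of an arbitrary group and with integer entries. -/
structure QuotientCuspRelations {G : Type*} [Group G] (a b c d : ℤ) (x₁ y₁ x₂ y₂ : G) : Prop where
  conj_y₁ : x₁⁻¹ * y₁ * x₁ = y₁⁻¹
  conj_y₂ : x₂⁻¹ * y₂ * x₂ = y₂⁻¹
  sq_x₂ : x₂ ^ 2 = x₁ ^ (2 * a) * y₁ ^ c
  y₂_eq : y₂ = x₁ ^ (2 * b) * y₁ ^ d

namespace QuotientCuspRelations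

lemma presentedGroup (a b c d : ℕ) :
    QuotientCuspRelations (G := PresentedGroup (quotientCuspRels a b c d)) a b c d
      (.of 0) (.of 1) (.of 2) (.of 3) := by
  have rel {r : FreeGroup (Fin 4)} (hr : r ∈ quotientCuspRels a b c d) :
      PresentedGroup.mk (quotientCuspRels a b c d) r = 1 :=
    PresentedGroup.one_of_mem hr
  constructor
  · exact eq_inv_of_mul_eq_one_left (rel (.inl rfl))
  · exact eq_inv_of_mul_eq_one_left (rel (.inr (.inl rfl)))
  · exact_mod_cast mul_inv_eq_one.mp (rel (.inr (.inr (.inl rfl))))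
  · exact_mod_cast mul_inv_eq_one.mp (rel (.inr (.inr (.inr rfl))))

variable {G : Type*} [Group G] {a b c d : ℤ} {x₁ y₁ x₂ y₂ : G}

lemma conj_x₂ (h : QuotientCuspRelations a b c d x₁ y₁ x₂ y₂) (hdet : a * d - b * c = 1) :
    MulAut.conj x₂⁻¹ (x₁ ^ 2) = (x₁ ^ 2) ^ (a * d + b * c) * y₁ ^ (2 * c * d) ∧
      MulAut.conj x₂⁻¹ y₁ = (x₁ ^ 2) ^ (-(2 * a * b)) * y₁ ^ (-(a * d + b * c)) := by
  have hx₂ : x₂ ^ 2 = (x₁ ^ 2) ^ a * y₁ ^ c := by rw [h.sq_x₂, zpow_mul, zpow_ofNat]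
  have hy₂ : y₂ = (x₁ ^ 2) ^ b * y₁ ^ d := by rw [h.y₂_eq, zpow_mul, zpow_ofNat]
  refine map_eq_zpow_mul_zpow_of_map_eq_self_of_map_eq_inv (commute_sq_of_conj_eq_inv h.conj_y₁)
    hdet (MulAut.conj x₂⁻¹).toMonoidHom ?_ ?_
  · rw [← hx₂]
    simp [pow_two]
  · rw [← hy₂]
    simpa using h.conj_y₂

lemma conj_x₁_mul_x₂ (h : QuotientCuspRelations a b c d x₁ y₁ x₂ y₂) (hdet : a * d - b * c = 1) :
    MulAut.conj (x₁ * x₂)⁻¹ (x₁ ^ 2) = (x₁ ^ 2) ^ (a * d + b * c) * y₁ ^ (2 * c * d) ∧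
      MulAut.conj (x₁ * x₂)⁻¹ y₁ = (x₁ ^ 2) ^ (2 * a * b) * y₁ ^ (a * d + b * c) := by
  obtain ⟨hx, hy⟩ := h.conj_x₂ hdet
  have hx₁ : MulAut.conj x₁⁻¹ (x₁ ^ 2) = x₁ ^ 2 := by simp [pow_two]
  have hy₁ : MulAut.conj x₁⁻¹ y₁ = y₁⁻¹ := by simpa using h.conj_y₁
  have hconj (g : G) :
      MulAut.conj (x₁ * x₂)⁻¹ g = MulAut.conj x₂⁻¹ (MulAut.conj x₁⁻¹ g) := by
    rw [mul_inv_rev, map_mul, MulAut.mul_apply]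
  constructor
  · rw [hconj, hx₁, hx]
  · rw [hconj, hy₁, map_inv, hy, ← zpow_neg_one,
      zpow_mul_zpow_zpow_of_commute (commute_sq_of_conj_eq_inv h.conj_y₁)]
    congr 2 <;> ring

end QuotientCuspRelations

theorem stmt_11_general {G : Type*} [Group G] {a b c d : ℤ} {x₁ y₁ x₂ y₂ : G}
    (h : QuotientCuspRelations a b c d x₁ y₁ x₂ y₂) (hdet : a * d - b * c = 1) :
    let z := x₁ * x₂
    z⁻¹ * x₁ ^ (4 * b) * z = x₁ ^ (4 * b * (a * d + b * c)) * y₁ ^ (4 * b * c * d) ∧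
      z⁻¹ * y₁ ^ 2 * z = x₁ ^ (8 * a * b) * y₁ ^ (2 * (a * d + b * c)) := by
  intro z
  obtain ⟨hx, hy⟩ := h.conj_x₁_mul_x₂ hdet
  have hcomm := commute_sq_of_conj_eq_inv h.conj_y₁
  have hconj (g : G) : z⁻¹ * g * z = MulAut.conj z⁻¹ g := by rw [MulAut.conj_apply, inv_inv]
  have hsq (k : ℤ) : x₁ ^ (2 * k) = (x₁ ^ 2) ^ k := by rw [zpow_mul, zpow_ofNat]
  constructor
  · rw [hconj, show 4 * b = 2 * (2 * b) by ring, hsq, map_zpow, hx,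
      zpow_mul_zpow_zpow_of_commute hcomm, ← hsq]
    congr 2 <;> ring
  · rw [hconj, map_pow, hy, ← zpow_natCast, zpow_mul_zpow_zpow_of_commute hcomm, ← hsq]
    congr 2 <;> push_cast <;> ring

theorem stmt_11 (a b c d : ℕ) (ha : 0 < a) (hb : 0 < b) (hc : 0 < c) (hd : 0 < d)
    (hdet : a * d = b * c + 1) :
    let z : PresentedGroup (quotientCuspRels a b c d) :=
      PresentedGroup.of 0 * PresentedGroup.of 2
    (z⁻¹ * (PresentedGroup.of 0) ^ (4 * b) * z =
        (PresentedGroup.of 0) ^ (4 * b * (a * d + b * c)) *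
          (PresentedGroup.of 1) ^ (4 * b * c * d)) ∧
      (z⁻¹ * (PresentedGroup.of 1) ^ 2 * z =
        (PresentedGroup.of 0) ^ (8 * a * b) *
          (PresentedGroup.of 1) ^ (2 * (a * d + b * c))) := by
  exact_mod_cast stmt_11_general (.presentedGroup a b c d) (by zify at hdet; linarith)
end

section
/- Every element g of the group G can be written as g = S₁^j T^k S₃^l with 0 ≤ j ≤ 4b−1 and 0 ≤ k, l ≤ 1, and the exponents (j, k, l) in these ranges are uniquely determined by g. -/
/-!
With `T = S₁S₂⁻¹`, one has `-1 = S₁^(2b) T^(a+1)`, `S₂ = TS₁` and `S₄ = -TS₃`, so `G` is the top of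
the chain `1 ≤ ⟨S₁⟩ ≤ ⟨S₁, T⟩ ≤ ⟨S₁, T, S₃⟩`. The adjoined elements `S₁`, `T`, `S₃` have
orders `4b`, `2`, `2` modulo the preceding subgroup, so the exponents can be read off from the top
down. The congruence `ad ≡ 1 (mod b)` is what puts `S₃²` into `⟨S₁, T⟩`.
-/

open Subgroup

section NormalForm

theorem existsUnique_eq_pow_of_mem_zpowers {G : Type*} [Group G] {x g : G} {n : ℕ} [NeZero n]
    (hx : orderOf x = n) (hg : g ∈ zpowers x) : ∃! i : Fin n, g = x ^ (i : ℕ) := by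
  subst hx
  have hfin : IsOfFinOrder x := orderOf_pos_iff.mp (NeZero.pos _)
  simpa only [finEquivZPowers_apply, Subtype.ext_iff, eq_comm (a := g)] using
    (finEquivZPowers hfin).bijective.existsUnique ⟨g, hg⟩

variable {A : Type*} [CommGroup A]

theorem existsUnique_div_pow_mem {H : Subgroup A} {y g : A} {n : ℕ} [NeZero n]
    (hy : orderOf (y : A ⧸ H) = n) (hg : g ∈ H ⊔ zpowers y) :
    ∃! i : Fin n, g / y ^ (i : ℕ) ∈ H := by
  have hg' : (g : A ⧸ H) ∈ zpowers (y : A ⧸ H) := by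
    obtain ⟨h, hh, z, ⟨m, rfl⟩, rfl⟩ := mem_sup.mp hg
    exact ⟨m, by simp [(QuotientGroup.eq_one_iff h).mpr hh]⟩
  have mem_iff (i : Fin n) : g / y ^ (i : ℕ) ∈ H ↔ (g : A ⧸ H) = (y : A ⧸ H) ^ (i : ℕ) := by
    rw [← QuotientGroup.mk_pow, QuotientGroup.eq_iff_div_mem]
  simpa only [mem_iff] using existsUnique_eq_pow_of_mem_zpowers hy hg'

theorem existsUnique_eq_pow_mul_pow_mul_pow {x t y g : A} {n p q : ℕ} [NeZero n] [NeZero p]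
    [NeZero q] (hx : orderOf x = n) (ht : orderOf (t : A ⧸ zpowers x) = p)
    (hy : orderOf (y : A ⧸ zpowers x ⊔ zpowers t) = q)
    (hg : g ∈ zpowers x ⊔ zpowers t ⊔ zpowers y) :
    ∃! e : Fin n × Fin p × Fin q,
      g = x ^ (e.1 : ℕ) * t ^ (e.2.1 : ℕ) * y ^ (e.2.2 : ℕ) := by
  obtain ⟨l, hl, l_unique⟩ := existsUnique_div_pow_mem hy hg
  obtain ⟨k, hk, k_unique⟩ := existsUnique_div_pow_mem ht hl
  obtain ⟨j, hj, j_unique⟩ := existsUnique_eq_pow_of_mem_zpowers hx hk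
  refine ⟨(j, k, l), by simp [← hj], ?_⟩
  rintro ⟨j', k', l'⟩ rfl
  obtain rfl : l' = l := l_unique l' <| by
    simpa only [mul_div_cancel_right] using
      mul_mem_sup (npow_mem_zpowers x j') (npow_mem_zpowers t k')
  obtain rfl : k' = k := k_unique k' <| by
    simpa only [mul_div_cancel_right] using npow_mem_zpowers x j'
  obtain rfl : j' = j := j_unique j' <| by simp only [mul_div_cancel_right]
  rfl

theorem orderOf_mk_eq_two {H : Subgroup A} {y : A} (hsq : y ^ 2 ∈ H) (hy : y ∉ H) :
    orderOf (y : A ⧸ H) = 2 :=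
  orderOf_eq_prime ((QuotientGroup.eq_one_iff _).mpr hsq) (mt (QuotientGroup.eq_one_iff y).mp hy)

end NormalForm

section Generators

variable {A : Type*} [CommGroup A] [HasDistribNeg A]

/-- The diagonal of `S₁`, with entries in any commutative group with a negation. -/
def diagS₁ (w : A) (a : ℕ) : Fin 4 → A := ![-w ^ a, w ^ a, w, w]

/-- The diagonal of `S₂`. -/
def diagS₂ (w : A) (a : ℕ) : Fin 4 → A := ![w ^ a, -w ^ a, w, w]

/-- The diagonal of `S₃`. -/
def diagS₃ (w : A) (d : ℕ) : Fin 4 → A := ![w, w, -w ^ d, w ^ d]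

/-- The diagonal of `S₄`. -/
def diagS₄ (w : A) (d : ℕ) : Fin 4 → A := ![w, w, w ^ d, -w ^ d]

/-- The diagonal of `T = S₁S₂⁻¹`. -/
def diagT (A : Type*) [CommGroup A] [HasDistribNeg A] : Fin 4 → A := ![-1, -1, 1, 1]

variable {w : A} {a b d : ℕ}

theorem diagT_sq : diagT A ^ 2 = 1 := by
  ext i; fin_cases i <;> simp [diagT]

theorem diagS₂_eq : diagS₂ w a = diagT A * diagS₁ w a := by
  ext i; fin_cases i <;> simp [diagS₁, diagS₂, diagT]

theorem diagS₄_eq : diagS₄ w d = -1 * diagT A * diagS₃ w d := by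
  ext i; fin_cases i <;> simp [diagS₃, diagS₄, diagT]

theorem diagS₁_mul_inv_diagS₂ : diagS₁ w a * (diagS₂ w a)⁻¹ = diagT A := by
  rw [mul_inv_eq_iff_eq_mul, diagS₂_eq, ← mul_assoc, ← sq, diagT_sq, one_mul]

theorem diagS₁_pow_mul_diagT_pow (hw : w ^ (2 * b) = -1) :
    diagS₁ w a ^ (2 * b) * diagT A ^ (a + 1) = -1 := by
  have hwa : (w ^ a) ^ (2 * b) = (-1) ^ a := by rw [pow_right_comm, hw]
  have hsq : (-1 : A) ^ a * (-1) ^ a = 1 := by rw [← mul_pow, neg_mul_neg, one_mul, one_pow]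
  ext i
  fin_cases i <;> simp [diagS₁, diagT, (even_two_mul b).neg_pow, hw, hwa, pow_succ, hsq]

theorem diagS₁_pow_four_mul (hw : w ^ (2 * b) = -1) : diagS₁ w a ^ (4 * b) = 1 := by
  have hsq : diagS₁ w a ^ (2 * b) = -(diagT A ^ (a + 1))⁻¹ := by
    rw [eq_comm, ← neg_one_mul, mul_inv_eq_iff_eq_mul, diagS₁_pow_mul_diagT_pow hw]
  rw [show 4 * b = 2 * b * 2 by ring, pow_mul, hsq, neg_sq, inv_pow, pow_right_comm, diagT_sq,
    one_pow, inv_one]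

theorem orderOf_diagS₁ (hw : w ^ (2 * b) = -1) (hord : orderOf w = 4 * b) :
    orderOf (diagS₁ w a) = 4 * b :=
  Nat.dvd_antisymm (orderOf_dvd_of_pow_eq_one (diagS₁_pow_four_mul hw))
    (hord ▸ orderOf_map_dvd (Pi.evalMonoidHom (fun _ : Fin 4 => A) 3) (diagS₁ w a))

theorem closure_diagS_eq (hw : w ^ (2 * b) = -1) :
    closure {diagS₁ w a, diagS₂ w a, diagS₃ w d, diagS₄ w d} =
      zpowers (diagS₁ w a) ⊔ zpowers (diagT A) ⊔ zpowers (diagS₃ w d) := by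
  set G := closure {diagS₁ w a, diagS₂ w a, diagS₃ w d, diagS₄ w d}
  set H := zpowers (diagS₁ w a) ⊔ zpowers (diagT A) ⊔ zpowers (diagS₃ w d)
  apply le_antisymm
  · have h₁ : diagS₁ w a ∈ H := mem_sup_left (mem_sup_left (mem_zpowers _))
    have hT : diagT A ∈ H := mem_sup_left (mem_sup_right (mem_zpowers _))
    have h₃ : diagS₃ w d ∈ H := mem_sup_right (mem_zpowers _)
    have hneg : -1 ∈ H := diagS₁_pow_mul_diagT_pow (a := a) hw ▸
      mul_mem (pow_mem h₁ _) (pow_mem hT _)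
    rw [closure_le]
    rintro _ (rfl | rfl | rfl | rfl)
    · exact h₁
    · exact diagS₂_eq (w := w) ▸ mul_mem hT h₁
    · exact h₃
    · exact diagS₄_eq (w := w) ▸ mul_mem (mul_mem hneg hT) h₃
  · have h₁ : diagS₁ w a ∈ G := subset_closure (by simp)
    have h₂ : diagS₂ w a ∈ G := subset_closure (by simp)
    have h₃ : diagS₃ w d ∈ G := subset_closure (by simp)
    simp only [H, sup_le_iff, zpowers_le]
    exact ⟨⟨h₁, diagS₁_mul_inv_diagS₂ (w := w) ▸ mul_mem h₁ (inv_mem h₂)⟩, h₃⟩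

theorem diagT_notMem_zpowers (hw : w ^ (2 * b) = -1) (hord : orderOf w = 4 * b)
    (hne : (-1 : A) ≠ 1) : diagT A ∉ zpowers (diagS₁ w a) := by
  rintro ⟨m, hm : diagS₁ w a ^ m = diagT A⟩
  have hwm : w ^ m = 1 := congrFun hm 3
  have hone : diagS₁ w a ^ m = 1 := by
    rwa [← orderOf_dvd_iff_zpow_eq_one, orderOf_diagS₁ hw hord, ← hord,
      orderOf_dvd_iff_zpow_eq_one]
  exact hne (congrFun (hm.symm.trans hone) 0)

theorem diagS₃_notMem_zpowers_sup (hne : (-1 : A) ≠ 1) :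
    diagS₃ w d ∉ zpowers (diagS₁ w a) ⊔ zpowers (diagT A) := by
  have hle : zpowers (diagS₁ w a) ⊔ zpowers (diagT A) ≤
      (Pi.evalMonoidHom (fun _ : Fin 4 => A) 2).eqLocus (Pi.evalMonoidHom _ 3) := by
    rw [sup_le_iff, zpowers_le, zpowers_le]
    exact ⟨rfl, rfl⟩
  intro hmem
  have heq : -w ^ d = w ^ d := hle hmem
  exact hne (mul_eq_right.mp ((neg_one_mul _).trans heq))

theorem diagS₃_sq_mem (hw : w ^ (2 * b) = -1) (had : a * d ≡ 1 [MOD b]) :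
    diagS₃ w d ^ 2 ∈ zpowers (diagS₁ w a) ⊔ zpowers (diagT A) := by
  obtain ⟨c, hc⟩ := Nat.modEq_iff_dvd.mp had.symm
  have hexp : ((a * (2 * d) : ℕ) : ℤ) = (2 * b : ℕ) * c + (2 : ℕ) := by
    push_cast at hc ⊢
    linear_combination 2 * hc
  have hpow : w ^ (a * (2 * d)) = (-1) ^ c * w ^ 2 := by
    rw [← zpow_natCast, hexp, zpow_add, zpow_mul, zpow_natCast, zpow_natCast, hw]
  have hsq : diagS₁ w a ^ (2 * d) = diagT A ^ c * diagS₃ w d ^ 2 := by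
    ext i
    fin_cases i <;>
      simp [diagS₁, diagS₃, diagT, (even_two_mul d).neg_pow, ← pow_mul, hpow, mul_comm d]
  rw [← inv_mul_eq_iff_eq_mul.mpr hsq, mul_comm]
  exact mul_mem_sup (npow_mem_zpowers _ _) (inv_mem (zpow_mem_zpowers _ _))

theorem existsUnique_eq_diagS₁_pow_mul_diagT_pow_mul_diagS₃_pow [NeZero b]
    (hord : orderOf w = 4 * b) (hw : w ^ (2 * b) = -1) (had : a * d ≡ 1 [MOD b])
    {g : Fin 4 → A} (hg : g ∈ closure {diagS₁ w a, diagS₂ w a, diagS₃ w d, diagS₄ w d}) :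
    ∃! e : Fin (4 * b) × Fin 2 × Fin 2,
      g = diagS₁ w a ^ (e.1 : ℕ) * diagT A ^ (e.2.1 : ℕ) * diagS₃ w d ^ (e.2.2 : ℕ) := by
  have hb : 0 < b := NeZero.pos b
  have hne : (-1 : A) ≠ 1 := hw ▸ pow_ne_one_of_lt_orderOf (by lia) (by lia)
  refine existsUnique_eq_pow_mul_pow_mul_pow (orderOf_diagS₁ hw hord) ?_ ?_
    (closure_diagS_eq hw ▸ hg)
  · exact orderOf_mk_eq_two (diagT_sq (A := A) ▸ one_mem _) (diagT_notMem_zpowers hw hord hne)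
  · exact orderOf_mk_eq_two (diagS₃_sq_mem hw had) (diagS₃_notMem_zpowers_sup hne)

end Generators

section DiagonalMatrices

/-- The invertible diagonal matrix with a given tuple of units on its diagonal, as a group
homomorphism. -/
def diagonalUnitsHom (ι R : Type*) [Fintype ι] [DecidableEq ι] [Semiring R] :
    (ι → Rˣ) →* (Matrix ι ι R)ˣ :=
  (Units.map (Matrix.diagonalRingHom ι R).toMonoidHom).comp MulEquiv.piUnits.symm.toMonoidHom

theorem diagonalUnitsHom_injective {ι R : Type*} [Fintype ι] [DecidableEq ι] [Semiring R] :
    Function.Injective (diagonalUnitsHom ι R) :=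
  (Units.map_injective Matrix.diagonal_injective).comp MulEquiv.piUnits.symm.injective

theorem eq_diagonalUnitsHom {ι R : Type*} [Fintype ι] [DecidableEq ι] [Semiring R]
    {S : (Matrix ι ι R)ˣ} {v : ι → R} {u : ι → Rˣ} (hS : (S : Matrix ι ι R) = Matrix.diagonal v)
    (hu : ∀ i, v i = u i) : S = diagonalUnitsHom ι R u :=
  Units.ext (hS.trans (congrArg Matrix.diagonal (funext hu)))

end DiagonalMatrices

theorem stmt_14_general {R : Type*} [CommRing R] [IsDomain R] {a b d : ℕ} (hb : 0 < b)
    (had : a * d ≡ 1 [MOD b]) {ω : R} (hω : IsPrimitiveRoot ω (4 * b))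
    {S₁ S₂ S₃ S₄ : (Matrix (Fin 4) (Fin 4) R)ˣ}
    (hS₁ : (S₁ : Matrix (Fin 4) (Fin 4) R) = Matrix.diagonal ![-ω ^ a, ω ^ a, ω, ω])
    (hS₂ : (S₂ : Matrix (Fin 4) (Fin 4) R) = Matrix.diagonal ![ω ^ a, -ω ^ a, ω, ω])
    (hS₃ : (S₃ : Matrix (Fin 4) (Fin 4) R) = Matrix.diagonal ![ω, ω, -ω ^ d, ω ^ d])
    (hS₄ : (S₄ : Matrix (Fin 4) (Fin 4) R) = Matrix.diagonal ![ω, ω, ω ^ d, -ω ^ d])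
    {g : (Matrix (Fin 4) (Fin 4) R)ˣ} (hg : g ∈ closure {S₁, S₂, S₃, S₄}) :
    ∃! e : Fin (4 * b) × Fin 2 × Fin 2,
      g = S₁ ^ (e.1 : ℕ) * (S₁ * S₂⁻¹) ^ (e.2.1 : ℕ) * S₃ ^ (e.2.2 : ℕ) := by
  have : NeZero b := ⟨hb.ne'⟩
  obtain ⟨w, rfl⟩ := hω.isUnit (NeZero.ne (4 * b))
  have hw : w ^ (2 * b) = -1 := Units.ext <| by
    simpa using (hω.pow (NeZero.pos _) (by ring : 4 * b = 2 * b * 2)).eq_neg_one_of_two_right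
  have hord : orderOf w = 4 * b := (IsPrimitiveRoot.coe_units_iff.mp hω).eq_orderOf.symm
  obtain rfl : S₁ = diagonalUnitsHom (Fin 4) R (diagS₁ w a) :=
    eq_diagonalUnitsHom hS₁ (by simp [Fin.forall_fin_succ, diagS₁])
  obtain rfl : S₂ = diagonalUnitsHom (Fin 4) R (diagS₂ w a) :=
    eq_diagonalUnitsHom hS₂ (by simp [Fin.forall_fin_succ, diagS₂])
  obtain rfl : S₃ = diagonalUnitsHom (Fin 4) R (diagS₃ w d) :=
    eq_diagonalUnitsHom hS₃ (by simp [Fin.forall_fin_succ, diagS₃])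
  obtain rfl : S₄ = diagonalUnitsHom (Fin 4) R (diagS₄ w d) :=
    eq_diagonalUnitsHom hS₄ (by simp [Fin.forall_fin_succ, diagS₄])
  obtain ⟨v, hv, rfl⟩ : g ∈ (closure {diagS₁ w a, diagS₂ w a, diagS₃ w d, diagS₄ w d}).map
      (diagonalUnitsHom (Fin 4) R) := by
    simpa only [MonoidHom.map_closure, Set.image_insert_eq, Set.image_singleton] using hg
  simpa only [← map_inv, ← map_mul, ← map_pow, diagonalUnitsHom_injective.eq_iff,
    diagS₁_mul_inv_diagS₂] using
    existsUnique_eq_diagS₁_pow_mul_diagT_pow_mul_diagS₃_pow hord hw had hv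

theorem stmt_14 (a b c d : ℕ) (ha : 0 < a) (hb : 0 < b) (hc : 0 < c) (hd : 0 < d)
    (hdet : a * d = b * c + 1) (ω : ℂ) (hω : IsPrimitiveRoot ω (4 * b))
    (S₁ S₂ S₃ S₄ : (Matrix (Fin 4) (Fin 4) ℂ)ˣ)
    (hS₁ : (S₁ : Matrix (Fin 4) (Fin 4) ℂ) = Matrix.diagonal ![-ω ^ a, ω ^ a, ω, ω])
    (hS₂ : (S₂ : Matrix (Fin 4) (Fin 4) ℂ) = Matrix.diagonal ![ω ^ a, -ω ^ a, ω, ω])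
    (hS₃ : (S₃ : Matrix (Fin 4) (Fin 4) ℂ) = Matrix.diagonal ![ω, ω, -ω ^ d, ω ^ d])
    (hS₄ : (S₄ : Matrix (Fin 4) (Fin 4) ℂ) = Matrix.diagonal ![ω, ω, ω ^ d, -ω ^ d]) :
    ∀ g ∈ Subgroup.closure {S₁, S₂, S₃, S₄},
      ∃! t : Fin (4 * b) × Fin 2 × Fin 2,
        g = S₁ ^ (t.1 : ℕ) * (S₁ * S₂⁻¹) ^ (t.2.1 : ℕ) * S₃ ^ (t.2.2 : ℕ) := by
  have had : a * d ≡ 1 [MOD b] := by simp [hdet, Nat.ModEq]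
  exact fun g hg => stmt_14_general hb had hω hS₁ hS₂ hS₃ hS₄ hg
end

section
/- Suppose c is even. Then S₁^{−d} T^{c/2} S₃ = diag(−1, 1, −1, 1), the group G is isomorphic to the product of cyclic groups C_{4b} × C₂ × C₂ (with the three factors generated by S₁, T, and diag(−1,1,−1,1)), and the non-identity elements of G having at least two diagonal entries equal to 1 are exactly the six diagonal matrices whose diagonal entries are ±1 with exactly two entries equal to 1 and two equal to −1. -/
/-!
Identify invertible diagonal matrices with vectors of units, and let `x` be the diagonal of `S₁`.
Since `ad = bc + 1` with `c` even, `a` is odd, whence `x ^ (2b) = -1`. Therefore `G = ⟨x⟩ E`, where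
`E` is the group of sign vectors with an even number of entries `-1`, generated by `-1`, `T` and
`(-1, 1, -1, 1)`. Every coordinate of `x ^ 2` is a primitive `2b`-th root of unity, so if
`g = x ^ k s` with `s ∈ E` has a single coordinate equal to `1`, then `2b ∣ k` and `g ∈ E`. Apart
from `±1`, the elements of `E` are the six vectors with two entries `1` and two entries `-1`.
-/

section CyclicProducts

/-- The homomorphism `k ↦ x ^ k` from the cyclic group of order `n` to a group containing an
element `x` with `x ^ n = 1`; for `n = 0` its domain is infinite cyclic. -/
noncomputable def zmodPowersHom {H : Type*} [Group H] {n : ℕ} {x : H} (hx : x ^ n = 1) :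
    Multiplicative (ZMod n) →* H :=
  AddMonoidHom.toMultiplicativeLeft <|
    ZMod.lift n ⟨zmultiplesHom (Additive H) (Additive.ofMul x), by simp [← ofMul_pow, hx]⟩

lemma zmodPowersHom_ofAdd_intCast {H : Type*} [Group H] {n : ℕ} {x : H} (hx : x ^ n = 1)
    (k : ℤ) : zmodPowersHom hx (Multiplicative.ofAdd (k : ZMod n)) = x ^ k := by
  simp [zmodPowersHom, ← ofMul_zpow]

theorem exists_mulEquiv_closure_triple {H : Type*} [CommGroup H] {x y z : H} {l m n : ℕ}
    (h : ∀ i j k : ℤ, x ^ i * y ^ j * z ^ k = 1 ↔ (l : ℤ) ∣ i ∧ (m : ℤ) ∣ j ∧ (n : ℤ) ∣ k) :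
    ∃ φ : Multiplicative (ZMod l) × Multiplicative (ZMod m) × Multiplicative (ZMod n) ≃*
        Subgroup.closure {x, y, z},
      φ (Multiplicative.ofAdd 1, 1, 1) = x ∧ φ (1, Multiplicative.ofAdd 1, 1) = y ∧
        φ (1, 1, Multiplicative.ofAdd 1) = z := by
  have hx : x ^ l = 1 := by simpa using h l 0 0
  have hy : y ^ m = 1 := by simpa using h 0 m 0
  have hz : z ^ n = 1 := by simpa using h 0 0 n
  set f := (zmodPowersHom hx).coprod ((zmodPowersHom hy).coprod (zmodPowersHom hz))
  have hf (i j k : ℤ) : f (Multiplicative.ofAdd (i : ZMod l), Multiplicative.ofAdd (j : ZMod m),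
      Multiplicative.ofAdd (k : ZMod n)) = x ^ i * y ^ j * z ^ k := by
    simp [f, zmodPowersHom_ofAdd_intCast, mul_assoc]
  have surj (p : Multiplicative (ZMod l) × Multiplicative (ZMod m) × Multiplicative (ZMod n)) :
      ∃ i j k : ℤ, p = (Multiplicative.ofAdd (i : ZMod l), Multiplicative.ofAdd (j : ZMod m),
        Multiplicative.ofAdd (k : ZMod n)) := by
    obtain ⟨i, hi⟩ := ZMod.intCast_surjective p.1.toAdd
    obtain ⟨j, hj⟩ := ZMod.intCast_surjective p.2.1.toAdd
    obtain ⟨k, hk⟩ := ZMod.intCast_surjective p.2.2.toAdd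
    exact ⟨i, j, k, by simp [hi, hj, hk]⟩
  have hfx : f (Multiplicative.ofAdd 1, 1, 1) = x := by simpa using hf 1 0 0
  have hfy : f (1, Multiplicative.ofAdd 1, 1) = y := by simpa using hf 0 1 0
  have hfz : f (1, 1, Multiplicative.ofAdd 1) = z := by simpa using hf 0 0 1
  have injective : Function.Injective f := by
    refine (injective_iff_map_eq_one f).mpr fun p hp ↦ ?_
    obtain ⟨i, j, k, rfl⟩ := surj p
    obtain ⟨hi, hj, hk⟩ := (h i j k).mp (hf i j k ▸ hp)
    simp [(ZMod.intCast_zmod_eq_zero_iff_dvd _ _).mpr, hi, hj, hk]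
  have range_eq : f.range = Subgroup.closure {x, y, z} := by
    refine le_antisymm ?_ ((Subgroup.closure_le _).mpr ?_)
    · rintro _ ⟨p, rfl⟩
      obtain ⟨i, j, k, rfl⟩ := surj p
      rw [hf]
      refine mul_mem (mul_mem (zpow_mem ?_ i) (zpow_mem ?_ j)) (zpow_mem ?_ k) <;>
        exact Subgroup.subset_closure (by simp)
    · rintro _ (rfl | rfl | rfl)
      exacts [⟨_, hfx⟩, ⟨_, hfy⟩, ⟨_, hfz⟩]
  exact ⟨(MonoidHom.ofInjective injective).trans (MulEquiv.subgroupCongr range_eq), hfx, hfy, hfz⟩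

end CyclicProducts

section DiagonalUnits

variable {n R : Type*} [Fintype n] [DecidableEq n] [CommRing R]

/-- The diagonal torus: the embedding of families of units as invertible diagonal matrices. -/
def diagonalUnits : (n → Rˣ) →* (Matrix n n R)ˣ :=
  (Units.map (Matrix.diagonalRingHom n R).toMonoidHom).comp MulEquiv.piUnits.symm.toMonoidHom

lemma coe_diagonalUnits (v : n → Rˣ) :
    (diagonalUnits v : Matrix n n R) = Matrix.diagonal fun i ↦ (v i : R) := rfl

lemma diagonalUnits_injective : Function.Injective (diagonalUnits : (n → Rˣ) → (Matrix n n R)ˣ) :=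
  (Units.map_injective Matrix.diagonal_injective).comp MulEquiv.piUnits.symm.injective

lemma coe_diagonalUnits_fin_four (p q r s : Rˣ) :
    (diagonalUnits ![p, q, r, s] : Matrix (Fin 4) (Fin 4) R) =
      Matrix.diagonal ![(p : R), q, r, s] := by
  rw [coe_diagonalUnits]
  congr 1
  ext i
  fin_cases i <;> rfl

theorem setOf_exists_diag_eq_one_eq_image (G : Subgroup (n → Rˣ)) :
    {m : Matrix n n R | ∃ g ∈ G.map diagonalUnits, g ≠ 1 ∧
      (∃ i j : n, i ≠ j ∧ (g : Matrix n n R) i i = 1 ∧ (g : Matrix n n R) j j = 1) ∧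
        (g : Matrix n n R) = m} =
      (fun v ↦ (diagonalUnits v : Matrix n n R)) ''
        {v ∈ (G : Set (n → Rˣ)) | v ≠ 1 ∧ ∃ i j, i ≠ j ∧ v i = 1 ∧ v j = 1} := by
  ext m
  simp only [Set.mem_ofPred_eq, Set.mem_image, Subgroup.mem_map, exists_exists_and_eq_and,
    coe_diagonalUnits, Matrix.diagonal_apply_eq, Units.val_eq_one, SetLike.mem_coe, and_assoc,
    map_ne_one_iff _ diagonalUnits_injective]

end DiagonalUnits

section EvenSigns

/-- The even sign vectors: families of elements of square `1` whose product is `1`. In the units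
of a domain these are the families of signs with an even number of entries `-1`. -/
def evenSigns (ι U : Type*) [Fintype ι] [CommGroup U] : Subgroup (ι → U) where
  carrier := {v | (∀ i, v i ^ 2 = 1) ∧ ∏ i, v i = 1}
  one_mem' := by simp
  mul_mem' := by
    rintro v w ⟨hv, hv'⟩ ⟨hw, hw'⟩
    simp [mul_pow, Finset.prod_mul_distrib, hv, hv', hw, hw']
  inv_mem' := by
    rintro v ⟨hv, hv'⟩
    simp [hv, hv']

theorem mem_evenSigns_of_sq_apply_eq_one {ι U : Type*} [Fintype ι] [CommGroup U] {x g : ι → U}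
    {n : ℕ} {i : ι} (hx : IsPrimitiveRoot (x i ^ 2) n) (hxn : x ^ n ∈ evenSigns ι U)
    (hg : g ∈ Subgroup.zpowers x ⊔ evenSigns ι U) (hi : g i ^ 2 = 1) :
    g ∈ evenSigns ι U := by
  obtain ⟨_, ⟨k, rfl⟩, s, hs, rfl⟩ := Subgroup.mem_sup.mp hg
  have hk : (x i ^ 2) ^ k = 1 := by
    have hsq : (x i ^ k * s i) ^ 2 = 1 := hi
    rwa [mul_pow, hs.1 i, mul_one, ← zpow_natCast, zpow_comm, zpow_natCast] at hsq
  obtain ⟨q, rfl⟩ := (hx.zpow_eq_one_iff_dvd k).mp hk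
  refine mul_mem ?_ hs
  simpa [zpow_mul] using zpow_mem hxn q

/-- The sign vector of `T = S₁ S₂⁻¹`. -/
def signT (R : Type*) [CommRing R] : Fin 4 → Rˣ := ![-1, -1, 1, 1]

/-- The sign vector of the third generator `S₁^{-d} T^{c/2} S₃`. -/
def signU (R : Type*) [CommRing R] : Fin 4 → Rˣ := ![-1, 1, -1, 1]

variable {R : Type*} [CommRing R]

lemma signT_mem_evenSigns : signT R ∈ evenSigns (Fin 4) Rˣ :=
  ⟨fun i ↦ by fin_cases i <;> simp [signT], by simp [signT, Fin.prod_univ_four]⟩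

lemma signU_mem_evenSigns : signU R ∈ evenSigns (Fin 4) Rˣ :=
  ⟨fun i ↦ by fin_cases i <;> simp [signU], by simp [signU, Fin.prod_univ_four]⟩

lemma neg_one_mem_evenSigns : (-1 : Fin 4 → Rˣ) ∈ evenSigns (Fin 4) Rˣ :=
  ⟨fun i ↦ by simp, by simp [(by decide : Even 4).neg_one_pow]⟩

/-- The sign vectors with two entries `1` and two entries `-1`. -/
def balancedSigns (R : Type*) [CommRing R] : Set (Fin 4 → Rˣ) :=
  {![-1, -1, 1, 1], ![1, 1, -1, -1], ![-1, 1, -1, 1], ![1, -1, 1, -1], ![-1, 1, 1, -1],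
    ![1, -1, -1, 1]}

lemma image_balancedSigns :
    (fun v : Fin 4 → Rˣ ↦ (diagonalUnits v : Matrix (Fin 4) (Fin 4) R)) '' balancedSigns R =
      {Matrix.diagonal ![-1, -1, 1, 1], Matrix.diagonal ![1, 1, -1, -1],
        Matrix.diagonal ![-1, 1, -1, 1], Matrix.diagonal ![1, -1, 1, -1],
        Matrix.diagonal ![-1, 1, 1, -1], Matrix.diagonal ![1, -1, -1, 1]} := by
  simp [balancedSigns, Set.image_insert_eq, coe_diagonalUnits_fin_four]

theorem eq_one_or_eq_neg_one_or_mem_balancedSigns [NoZeroDivisors R] {v : Fin 4 → Rˣ}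
    (hv : v ∈ evenSigns (Fin 4) Rˣ) : v = 1 ∨ v = -1 ∨ v ∈ balancedSigns R := by
  have sign (i : Fin 4) : v i = 1 ∨ v i = -1 := by
    have hsq : (v i : R) ^ 2 = 1 := congrArg Units.val (hv.1 i)
    exact (sq_eq_one_iff.mp hsq).imp Units.ext Units.ext
  have last : v 3 = (v 0 * v 1 * v 2)⁻¹ := by
    rw [eq_inv_iff_mul_eq_one, mul_comm, ← Fin.prod_univ_four, hv.2]
  rcases sign 0 with h₀ | h₀ <;> rcases sign 1 with h₁ | h₁ <;> rcases sign 2 with h₂ | h₂ <;>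
    simp [balancedSigns, funext_iff, Fin.forall_fin_succ, last, h₀, h₁, h₂]

lemma closure_neg_one_signT_signU [NoZeroDivisors R] :
    Subgroup.closure {-1, signT R, signU R} = evenSigns (Fin 4) Rˣ := by
  refine le_antisymm ?_ fun v hv ↦ ?_
  · rw [Subgroup.closure_le]
    rintro _ (rfl | rfl | rfl)
    exacts [neg_one_mem_evenSigns, signT_mem_evenSigns, signU_mem_evenSigns]
  · set K := Subgroup.closure {-1, signT R, signU R}
    have mem_neg {v} (hv : v ∈ K) : -v ∈ K :=
      neg_one_mul v ▸ mul_mem (Subgroup.subset_closure (by simp)) hv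
    have hT : signT R ∈ K := Subgroup.subset_closure (by simp)
    have hU : signU R ∈ K := Subgroup.subset_closure (by simp)
    have hTU : ![1, -1, -1, 1] ∈ K := by
      convert mul_mem hT hU
      ext i
      fin_cases i <;> simp [signT, signU]
    rcases eq_one_or_eq_neg_one_or_mem_balancedSigns hv with
      rfl | rfl | rfl | rfl | rfl | rfl | rfl | rfl
    · exact one_mem K
    · exact mem_neg (one_mem K)
    · exact hT
    · simpa [signT] using mem_neg hT
    · exact hU
    · simpa [signU] using mem_neg hU
    · simpa using mem_neg hTU
    · exact hTU

theorem balancedSigns_eq_setOf_mem_evenSigns [NoZeroDivisors R] (h : (-1 : Rˣ) ≠ 1) :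
    balancedSigns R =
      {v ∈ (evenSigns (Fin 4) Rˣ : Set (Fin 4 → Rˣ)) |
        v ≠ 1 ∧ ∃ i j, i ≠ j ∧ v i = 1 ∧ v j = 1} := by
  ext v
  constructor
  · intro hv
    have hv_even : v ∈ evenSigns (Fin 4) Rˣ := by
      rcases hv with rfl | rfl | rfl | rfl | rfl | rfl <;>
        exact ⟨fun i ↦ by fin_cases i <;> simp, by simp [Fin.prod_univ_four]⟩
    refine ⟨hv_even, ?_⟩
    rcases hv with rfl | rfl | rfl | rfl | rfl | rfl <;>
      simp [funext_iff, Fin.exists_fin_succ, Fin.forall_fin_succ, h]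
  · rintro ⟨hv, hne, i, -, -, hi, -⟩
    rcases eq_one_or_eq_neg_one_or_mem_balancedSigns hv with rfl | rfl | hv
    exacts [absurd rfl hne, absurd hi h, hv]

end EvenSigns

section TorusGroup

variable {R : Type*} [CommRing R] {w : Rˣ} {a b c d : ℕ}

/-- The diagonals of the four generators `S₁, S₂, S₃, S₄`, indexed from `0`, for `ω = w`. -/
def torusGen (w : Rˣ) (a d : ℕ) : Fin 4 → Fin 4 → Rˣ :=
  ![![-w ^ a, w ^ a, w, w], ![w ^ a, -w ^ a, w, w], ![w, w, -w ^ d, w ^ d],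
    ![w, w, w ^ d, -w ^ d]]

/-- The group `G` of the diagonals of the elements generated by `S₁, S₂, S₃, S₄`. -/
def torusGroup (w : Rˣ) (a d : ℕ) : Subgroup (Fin 4 → Rˣ) :=
  Subgroup.closure {torusGen w a d 0, torusGen w a d 1, torusGen w a d 2, torusGen w a d 3}

lemma map_diagonalUnits_torusGroup :
    (torusGroup w a d).map diagonalUnits = Subgroup.closure
      {diagonalUnits (torusGen w a d 0), diagonalUnits (torusGen w a d 1),
        diagonalUnits (torusGen w a d 2), diagonalUnits (torusGen w a d 3)} := by
  simp only [torusGroup, MonoidHom.map_closure, Set.image_insert_eq, Set.image_singleton]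

lemma odd_and_odd_of_det_eq_one (hdet : a * d = b * c + 1) (hc : Even c) : Odd a ∧ Odd d :=
  Nat.odd_mul.mp (hdet ▸ (hc.mul_left b).add_one)

lemma coprime_of_det_eq_one (hdet : a * d = b * c + 1) (hc : Even c) : Nat.Coprime a (2 * b) := by
  refine .mul_right (Nat.coprime_two_right.mpr (odd_and_odd_of_det_eq_one hdet hc).1) ?_
  refine Nat.isCoprime_iff_coprime.mp ⟨d, -c, ?_⟩
  have hdet' : (a * d : ℤ) = b * c + 1 := mod_cast hdet
  linear_combination hdet'

lemma pow_eq_neg_one_and_isPrimitiveRoot_neg_one [NoZeroDivisors R] {m n : ℕ} (hm : 0 < m)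
    (hw : IsPrimitiveRoot w m) (hmn : m = n * 2) : w ^ n = -1 ∧ IsPrimitiveRoot (-1 : Rˣ) 2 := by
  have hprim : IsPrimitiveRoot (w ^ n) 2 := hw.pow hm hmn
  have heq : w ^ n = -1 :=
    Units.ext (IsPrimitiveRoot.coe_units_iff.mpr hprim).eq_neg_one_of_two_right
  exact ⟨heq, heq ▸ hprim⟩

lemma torusGen_zero_mul_inv_torusGen_one :
    torusGen w a d 0 * (torusGen w a d 1)⁻¹ = signT R := by
  rw [mul_inv_eq_iff_eq_mul]
  ext i
  fin_cases i <;> simp [torusGen, signT]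

lemma torusGen_zero_pow (hw : w ^ (2 * b) = -1) (ha : Odd a) : torusGen w a d 0 ^ (2 * b) = -1 := by
  have hwa : (w ^ a) ^ (2 * b) = -1 := by rw [pow_right_comm, hw, ha.neg_one_pow]
  ext1 i
  fin_cases i <;> simp [torusGen, (even_two_mul b).neg_pow, hw, hwa]

lemma inv_torusGen_zero_pow_mul_signT_pow_mul_torusGen_two (hw : w ^ (2 * b) = -1)
    (hdet : a * d = b * c + 1) (hc : Even c) :
    (torusGen w a d 0 ^ d)⁻¹ * signT R ^ (c / 2) * torusGen w a d 2 = signU R := by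
  have hd := (odd_and_odd_of_det_eq_one hdet hc).2
  have hbc : b * c = 2 * b * (c / 2) := by
    rw [mul_right_comm, Nat.two_mul_div_two_of_even hc, mul_comm]
  have hwad : (w ^ a) ^ d = (-1) ^ (c / 2) * w := by
    rw [← pow_mul, hdet, pow_succ, hbc, pow_mul, hw]
  rw [mul_assoc, inv_mul_eq_iff_eq_mul]
  ext1 i
  fin_cases i <;> simp [torusGen, signT, signU, hd.neg_pow, hwad]

lemma torusGen_three : torusGen w a d 3 = -signT R * torusGen w a d 2 := by
  ext i
  fin_cases i <;> simp [torusGen, signT]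

theorem isPrimitiveRoot_torusGen_zero_sq (hb : 0 < b) (hw : IsPrimitiveRoot w (4 * b))
    (ha : Nat.Coprime a (2 * b)) (i : Fin 4) :
    IsPrimitiveRoot (torusGen w a d 0 i ^ 2) (2 * b) := by
  have hsq : IsPrimitiveRoot (w ^ 2) (2 * b) := hw.pow (by lia) (by ring)
  have hsqa : IsPrimitiveRoot ((w ^ a) ^ 2) (2 * b) :=
    pow_right_comm w 2 a ▸ hsq.pow_of_coprime a ha
  fin_cases i <;> simpa [torusGen]

theorem torusGroup_eq_closure (hw : w ^ (2 * b) = -1) (hdet : a * d = b * c + 1) (hc : Even c) :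
    torusGroup w a d = Subgroup.closure {torusGen w a d 0, signT R, signU R} := by
  have hT := torusGen_zero_mul_inv_torusGen_one (w := w) (a := a) (d := d)
  have hU := inv_torusGen_zero_pow_mul_signT_pow_mul_torusGen_two hw hdet hc
  refine le_antisymm ((Subgroup.closure_le _).mpr ?_) ((Subgroup.closure_le _).mpr ?_)
  · set K := Subgroup.closure {torusGen w a d 0, signT R, signU R}
    have mem₀ : torusGen w a d 0 ∈ K := Subgroup.subset_closure (by simp)
    have memT : signT R ∈ K := Subgroup.subset_closure (by simp)
    have memU : signU R ∈ K := Subgroup.subset_closure (by simp)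
    have mem_neg_one : -1 ∈ K :=
      torusGen_zero_pow hw (odd_and_odd_of_det_eq_one hdet hc).1 ▸ pow_mem mem₀ (2 * b)
    have mem₁ : torusGen w a d 1 ∈ K := by
      rwa [← hT, mul_mem_cancel_left mem₀, inv_mem_iff] at memT
    have mem₂ : torusGen w a d 2 ∈ K := by
      rwa [← hU, mul_mem_cancel_left (mul_mem (inv_mem (pow_mem mem₀ d)) (pow_mem memT _))] at memU
    have mem₃ : torusGen w a d 3 ∈ K := by
      rw [torusGen_three, ← neg_one_mul]
      exact mul_mem (mul_mem mem_neg_one memT) mem₂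
    rintro _ (rfl | rfl | rfl | rfl) <;> assumption
  · have mem₀ : torusGen w a d 0 ∈ torusGroup w a d := Subgroup.subset_closure (by simp)
    have mem₁ : torusGen w a d 1 ∈ torusGroup w a d := Subgroup.subset_closure (by simp)
    have mem₂ : torusGen w a d 2 ∈ torusGroup w a d := Subgroup.subset_closure (by simp)
    have memT : signT R ∈ torusGroup w a d := hT ▸ mul_mem mem₀ (inv_mem mem₁)
    have memU : signU R ∈ torusGroup w a d :=
      hU ▸ mul_mem (mul_mem (inv_mem (pow_mem mem₀ d)) (pow_mem memT _)) mem₂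
    rintro _ (rfl | rfl | rfl) <;> assumption

theorem torusGroup_eq_zpowers_sup_evenSigns [NoZeroDivisors R] (hw : w ^ (2 * b) = -1)
    (hdet : a * d = b * c + 1) (hc : Even c) :
    torusGroup w a d = Subgroup.zpowers (torusGen w a d 0) ⊔ evenSigns (Fin 4) Rˣ := by
  have hneg : Subgroup.closure {-1} ≤ Subgroup.zpowers (torusGen w a d 0) := by
    rw [Subgroup.closure_le, Set.singleton_subset_iff,
      ← torusGen_zero_pow hw (odd_and_odd_of_det_eq_one hdet hc).1]
    exact Subgroup.npow_mem_zpowers _ _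
  rw [torusGroup_eq_closure hw hdet hc, ← closure_neg_one_signT_signU, Set.insert_eq,
    Set.insert_eq (-1), Subgroup.closure_union, Subgroup.closure_union, ← sup_assoc,
    ← Subgroup.zpowers_eq_closure, sup_eq_left.mpr hneg]

theorem torusGen_zero_zpow_mul_eq_one_iff [NoZeroDivisors R] (hb : 0 < b)
    (hw : IsPrimitiveRoot w (4 * b)) (ha : Odd a) (i j k : ℤ) :
    torusGen w a d 0 ^ i * signT R ^ j * signU R ^ k = 1 ↔
      ((4 * b : ℕ) : ℤ) ∣ i ∧ ((2 : ℕ) : ℤ) ∣ j ∧ ((2 : ℕ) : ℤ) ∣ k := by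
  obtain ⟨hw2b, hneg⟩ :=
    pow_eq_neg_one_and_isPrimitiveRoot_neg_one (n := 2 * b) (by lia) hw (by ring)
  constructor
  · intro h
    have h₃ : w ^ i = 1 := by simpa [torusGen, signT, signU] using congrFun h 3
    have h₂ : (-1 : Rˣ) ^ k = 1 := by simpa [torusGen, signT, signU, h₃] using congrFun h 2
    have h₁ : (-1 : Rˣ) ^ j = 1 := by
      have hwa : (w ^ a) ^ i = 1 := by rw [← zpow_natCast, zpow_comm, h₃, one_zpow]
      simpa [torusGen, signT, signU, hwa] using congrFun h 1
    exact ⟨(hw.zpow_eq_one_iff_dvd i).mp h₃, (hneg.zpow_eq_one_iff_dvd j).mp h₁,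
      (hneg.zpow_eq_one_iff_dvd k).mp h₂⟩
  · have hx : torusGen w a d 0 ^ (4 * b) = 1 := by
      rw [show 4 * b = 2 * b * 2 by ring, pow_mul, torusGen_zero_pow hw2b ha, neg_one_sq]
    have hT : signT R ^ 2 = 1 := funext signT_mem_evenSigns.1
    have hU : signU R ^ 2 = 1 := funext signU_mem_evenSigns.1
    rintro ⟨⟨i, rfl⟩, ⟨j, rfl⟩, ⟨k, rfl⟩⟩
    simp only [zpow_mul, zpow_natCast, hx, hT, hU, one_zpow, mul_one]

theorem exists_mulEquiv_torusGroup [NoZeroDivisors R] (hb : 0 < b) (hw : IsPrimitiveRoot w (4 * b))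
    (hdet : a * d = b * c + 1) (hc : Even c) :
    ∃ φ : Multiplicative (ZMod (4 * b)) × Multiplicative (ZMod 2) × Multiplicative (ZMod 2) ≃*
        torusGroup w a d,
      φ (Multiplicative.ofAdd 1, 1, 1) = torusGen w a d 0 ∧
        φ (1, Multiplicative.ofAdd 1, 1) = signT R ∧
          φ (1, 1, Multiplicative.ofAdd 1) = signU R := by
  have hw2b := (pow_eq_neg_one_and_isPrimitiveRoot_neg_one (n := 2 * b) (by lia) hw (by ring)).1
  rw [torusGroup_eq_closure hw2b hdet hc]
  exact exists_mulEquiv_closure_triple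
    (torusGen_zero_zpow_mul_eq_one_iff hb hw (odd_and_odd_of_det_eq_one hdet hc).1)

theorem setOf_mem_torusGroup_eq_balancedSigns [NoZeroDivisors R] (hb : 0 < b)
    (hw : IsPrimitiveRoot w (4 * b)) (hdet : a * d = b * c + 1) (hc : Even c) :
    {v ∈ (torusGroup w a d : Set (Fin 4 → Rˣ)) | v ≠ 1 ∧ ∃ i j, i ≠ j ∧ v i = 1 ∧ v j = 1} =
      balancedSigns R := by
  obtain ⟨hw2b, hneg⟩ :=
    pow_eq_neg_one_and_isPrimitiveRoot_neg_one (n := 2 * b) (by lia) hw (by ring)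
  have hG := torusGroup_eq_zpowers_sup_evenSigns hw2b hdet hc
  have hx := isPrimitiveRoot_torusGen_zero_sq (d := d) hb hw (coprime_of_det_eq_one hdet hc)
  have hxn : torusGen w a d 0 ^ (2 * b) ∈ evenSigns (Fin 4) Rˣ :=
    torusGen_zero_pow hw2b (odd_and_odd_of_det_eq_one hdet hc).1 ▸ neg_one_mem_evenSigns
  rw [balancedSigns_eq_setOf_mem_evenSigns (hneg.ne_one one_lt_two), hG]
  refine Set.Subset.antisymm ?_ fun v hv ↦ ⟨Subgroup.mem_sup_right hv.1, hv.2⟩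
  rintro v ⟨hv, hne, i, j, hij, hi, hj⟩
  exact ⟨mem_evenSigns_of_sq_apply_eq_one (hx i) hxn hv (by simp [hi]), hne, i, j, hij, hi, hj⟩

end TorusGroup

theorem stmt_16_general {R : Type*} [CommRing R] [NoZeroDivisors R] (a b c d : ℕ) (hb : 0 < b)
    (hdet : a * d = b * c + 1) (hceven : Even c) (ω : R) (hω : IsPrimitiveRoot ω (4 * b))
    (S₁ S₂ S₃ S₄ : (Matrix (Fin 4) (Fin 4) R)ˣ)
    (hS₁ : (S₁ : Matrix (Fin 4) (Fin 4) R) = Matrix.diagonal ![-ω ^ a, ω ^ a, ω, ω])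
    (hS₂ : (S₂ : Matrix (Fin 4) (Fin 4) R) = Matrix.diagonal ![ω ^ a, -ω ^ a, ω, ω])
    (hS₃ : (S₃ : Matrix (Fin 4) (Fin 4) R) = Matrix.diagonal ![ω, ω, -ω ^ d, ω ^ d])
    (hS₄ : (S₄ : Matrix (Fin 4) (Fin 4) R) = Matrix.diagonal ![ω, ω, ω ^ d, -ω ^ d]) :
    (((S₁ ^ d)⁻¹ * (S₁ * S₂⁻¹) ^ (c / 2) * S₃ : (Matrix (Fin 4) (Fin 4) R)ˣ) :
        Matrix (Fin 4) (Fin 4) R) = Matrix.diagonal ![-1, 1, -1, 1] ∧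
    (∃ φ : Multiplicative (ZMod (4 * b)) × Multiplicative (ZMod 2) × Multiplicative (ZMod 2) ≃*
        (Subgroup.closure {S₁, S₂, S₃, S₄} : Subgroup (Matrix (Fin 4) (Fin 4) R)ˣ),
      ((φ (Multiplicative.ofAdd 1, 1, 1) : (Matrix (Fin 4) (Fin 4) R)ˣ) = S₁) ∧
      ((φ (1, Multiplicative.ofAdd 1, 1) : (Matrix (Fin 4) (Fin 4) R)ˣ) = S₁ * S₂⁻¹) ∧
      ((φ (1, 1, Multiplicative.ofAdd 1) : (Matrix (Fin 4) (Fin 4) R)ˣ) =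
        (S₁ ^ d)⁻¹ * (S₁ * S₂⁻¹) ^ (c / 2) * S₃)) ∧
    ({m : Matrix (Fin 4) (Fin 4) R | ∃ g ∈ Subgroup.closure {S₁, S₂, S₃, S₄}, g ≠ 1 ∧
        (∃ i j : Fin 4, i ≠ j ∧ (g : Matrix (Fin 4) (Fin 4) R) i i = 1 ∧
          (g : Matrix (Fin 4) (Fin 4) R) j j = 1) ∧ (g : Matrix (Fin 4) (Fin 4) R) = m} =
      {Matrix.diagonal ![-1, -1, 1, 1], Matrix.diagonal ![1, 1, -1, -1],
        Matrix.diagonal ![-1, 1, -1, 1], Matrix.diagonal ![1, -1, 1, -1],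
        Matrix.diagonal ![-1, 1, 1, -1], Matrix.diagonal ![1, -1, -1, 1]}) := by
  obtain ⟨w, rfl⟩ := hω.isUnit (by lia)
  rw [IsPrimitiveRoot.coe_units_iff] at hω
  have hw2b : w ^ (2 * b) = -1 :=
    (pow_eq_neg_one_and_isPrimitiveRoot_neg_one (n := 2 * b) (by lia) hω (by ring)).1
  obtain rfl : S₁ = diagonalUnits (torusGen w a d 0) :=
    Units.ext (by simp [hS₁, torusGen, coe_diagonalUnits_fin_four])
  obtain rfl : S₂ = diagonalUnits (torusGen w a d 1) :=
    Units.ext (by simp [hS₂, torusGen, coe_diagonalUnits_fin_four])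
  obtain rfl : S₃ = diagonalUnits (torusGen w a d 2) :=
    Units.ext (by simp [hS₃, torusGen, coe_diagonalUnits_fin_four])
  obtain rfl : S₄ = diagonalUnits (torusGen w a d 3) :=
    Units.ext (by simp [hS₄, torusGen, coe_diagonalUnits_fin_four])
  rw [← map_diagonalUnits_torusGroup]
  simp only [← map_inv, ← map_mul, ← map_pow, torusGen_zero_mul_inv_torusGen_one,
    inv_torusGen_zero_pow_mul_signT_pow_mul_torusGen_two hw2b hdet hceven]
  refine ⟨by simp [signU, coe_diagonalUnits_fin_four], ?_, ?_⟩
  · obtain ⟨φ, hx, hT, hU⟩ := exists_mulEquiv_torusGroup hb hω hdet hceven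
    exact ⟨φ.trans (Subgroup.equivMapOfInjective _ _ diagonalUnits_injective),
      congrArg diagonalUnits hx, congrArg diagonalUnits hT, congrArg diagonalUnits hU⟩
  · rw [setOf_exists_diag_eq_one_eq_image, setOf_mem_torusGroup_eq_balancedSigns hb hω hdet hceven,
      image_balancedSigns]

theorem stmt_16 (a b c d : ℕ) (ha : 0 < a) (hb : 0 < b) (hc : 0 < c) (hd : 0 < d)
    (hdet : a * d = b * c + 1) (hceven : Even c)
    (ω : ℂ) (hω : IsPrimitiveRoot ω (4 * b))
    (S₁ S₂ S₃ S₄ : (Matrix (Fin 4) (Fin 4) ℂ)ˣ)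
    (hS₁ : (S₁ : Matrix (Fin 4) (Fin 4) ℂ) = Matrix.diagonal ![-ω ^ a, ω ^ a, ω, ω])
    (hS₂ : (S₂ : Matrix (Fin 4) (Fin 4) ℂ) = Matrix.diagonal ![ω ^ a, -ω ^ a, ω, ω])
    (hS₃ : (S₃ : Matrix (Fin 4) (Fin 4) ℂ) = Matrix.diagonal ![ω, ω, -ω ^ d, ω ^ d])
    (hS₄ : (S₄ : Matrix (Fin 4) (Fin 4) ℂ) = Matrix.diagonal ![ω, ω, ω ^ d, -ω ^ d]) :
    (((S₁ ^ d)⁻¹ * (S₁ * S₂⁻¹) ^ (c / 2) * S₃ : (Matrix (Fin 4) (Fin 4) ℂ)ˣ) :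
        Matrix (Fin 4) (Fin 4) ℂ) = Matrix.diagonal ![-1, 1, -1, 1] ∧
    (∃ φ : Multiplicative (ZMod (4 * b)) × Multiplicative (ZMod 2) × Multiplicative (ZMod 2) ≃*
        (Subgroup.closure {S₁, S₂, S₃, S₄} : Subgroup (Matrix (Fin 4) (Fin 4) ℂ)ˣ),
      ((φ (Multiplicative.ofAdd 1, 1, 1) : (Matrix (Fin 4) (Fin 4) ℂ)ˣ) = S₁) ∧
      ((φ (1, Multiplicative.ofAdd 1, 1) : (Matrix (Fin 4) (Fin 4) ℂ)ˣ) = S₁ * S₂⁻¹) ∧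
      ((φ (1, 1, Multiplicative.ofAdd 1) : (Matrix (Fin 4) (Fin 4) ℂ)ˣ) =
        (S₁ ^ d)⁻¹ * (S₁ * S₂⁻¹) ^ (c / 2) * S₃)) ∧
    ({m : Matrix (Fin 4) (Fin 4) ℂ | ∃ g ∈ Subgroup.closure {S₁, S₂, S₃, S₄}, g ≠ 1 ∧
        (∃ i j : Fin 4, i ≠ j ∧ (g : Matrix (Fin 4) (Fin 4) ℂ) i i = 1 ∧
          (g : Matrix (Fin 4) (Fin 4) ℂ) j j = 1) ∧ (g : Matrix (Fin 4) (Fin 4) ℂ) = m} =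
      {Matrix.diagonal ![-1, -1, 1, 1], Matrix.diagonal ![1, 1, -1, -1],
        Matrix.diagonal ![-1, 1, -1, 1], Matrix.diagonal ![1, -1, 1, -1],
        Matrix.diagonal ![-1, 1, 1, -1], Matrix.diagonal ![1, -1, -1, 1]}) :=
  stmt_16_general a b c d hb hdet hceven ω hω S₁ S₂ S₃ S₄ hS₁ hS₂ hS₃ hS₄
end
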